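/- arXiv:2202.07150 — 4 statements merged into one kernel-verified Lean document; each statement's English description precedes it below -/
import Mathlib

section
/- Let M and N be positive integers, T̄ = M + N, and let O be a uniformly random (Haar-distributed) T̄×T̄ orthogonal matrix of determinant 1, written in block form O = [[A, B],[C, D]] with A of size M×M and D of size N×N. Then almost surely 1_N + D is invertible, and the matrix Õ := A − B(1_N + D)^{−1}C is a uniformly random (Haar-distributed) M×M orthogonal matrix of determinant 1. Moreover, the random matrices Õ and B(1_N + D)^{−1} are independent. -/
open MeasureTheory ProbabilityTheory Matrix

noncomputable section

instance matMS (m n : Type*) : MeasurableSpace (Matrix m n ℝ) :=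
  (inferInstance : MeasurableSpace (m → n → ℝ))

/-- `ν` is the Haar (uniform) probability measure on the special orthogonal group. -/
def IsHaarSO (n : Type*) [Fintype n] [DecidableEq n] (ν : Measure (Matrix n n ℝ)) : Prop :=
  IsProbabilityMeasure ν ∧ (∀ᵐ O ∂ν, Oᵀ * O = 1 ∧ O.det = 1) ∧
    ∀ U : Matrix n n ℝ, Uᵀ * U = 1 → U.det = 1 → ν.map (fun O => U * O) = ν

section Meas
variable {α : Type*} [MeasurableSpace α] {l m n : Type*}

lemma meas_iff {f : α → Matrix m n ℝ} : Measurable f ↔ ∀ i j, Measurable fun a => f a i j := by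
  constructor
  · intro h i j
    exact (measurable_pi_apply j).comp ((measurable_pi_apply i).comp h)
  · intro h
    exact measurable_pi_iff.2 fun i => measurable_pi_iff.2 fun j => h i j

lemma meas_entry (i : m) (j : n) : Measurable fun A : Matrix m n ℝ => A i j :=
  meas_iff.1 measurable_id i j

lemma meas_mul [Fintype m] {f : α → Matrix l m ℝ} {g : α → Matrix m n ℝ}
    (hf : Measurable f) (hg : Measurable g) : Measurable fun a => f a * g a := by
  rw [meas_iff] at *
  intro i j
  simp only [Matrix.mul_apply]
  exact Finset.measurable_sum _ fun k _ => (hf i k).mul (hg k j)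

lemma meas_mulL [Fintype m] (U : Matrix l m ℝ) :
    Measurable fun O : Matrix m n ℝ => U * O := meas_mul measurable_const measurable_id

lemma meas_mulR [Fintype m] (U : Matrix m n ℝ) :
    Measurable fun O : Matrix l m ℝ => O * U := meas_mul measurable_id measurable_const

lemma meas_add {f g : α → Matrix m n ℝ}
    (hf : Measurable f) (hg : Measurable g) : Measurable fun a => f a + g a := by
  rw [meas_iff] at *
  intro i j
  exact (hf i j).add (hg i j)

lemma meas_sub {f g : α → Matrix m n ℝ}
    (hf : Measurable f) (hg : Measurable g) : Measurable fun a => f a - g a := by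
  rw [meas_iff] at *
  intro i j
  exact (hf i j).sub (hg i j)

lemma meas_transpose {f : α → Matrix m n ℝ} (hf : Measurable f) :
    Measurable fun a => (f a)ᵀ := by
  rw [meas_iff] at *
  intro i j
  exact hf j i

lemma meas_submatrix {p q : Type*} {f : α → Matrix m n ℝ} (hf : Measurable f)
    (r : p → m) (s : q → n) : Measurable fun a => (f a).submatrix r s := by
  rw [meas_iff] at *
  intro i j
  exact hf _ _

lemma meas_det [Fintype n] [DecidableEq n] {f : α → Matrix n n ℝ} (hf : Measurable f) :
    Measurable fun a => (f a).det := by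
  rw [meas_iff] at hf
  simp only [Matrix.det_apply']
  exact Finset.measurable_sum _ fun σ _ =>
    (Finset.measurable_prod _ fun i _ => hf _ _).const_mul _

lemma meas_inv [Fintype n] [DecidableEq n] {f : α → Matrix n n ℝ} (hf : Measurable f) :
    Measurable fun a => (f a)⁻¹ := by
  rw [meas_iff]
  intro i j
  simp only [Matrix.inv_def, Ring.inverse_eq_inv', Matrix.smul_apply, smul_eq_mul,
    Matrix.adjugate_apply]
  refine (meas_det hf).inv.mul (meas_det ?_)
  rw [meas_iff] at *
  intro a b
  simp only [Matrix.updateRow_apply]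
  split_ifs
  · exact measurable_const
  · exact hf _ _

end Meas

section Core
variable {m n : Type*} [Fintype m] [DecidableEq m] [Fintype n] [DecidableEq n]

/-- the projected matrix -/
def Phi (O : Matrix (m ⊕ n) (m ⊕ n) ℝ) : Matrix m m ℝ :=
  O.toBlocks₁₁ - O.toBlocks₁₂ * (1 + O.toBlocks₂₂)⁻¹ * O.toBlocks₂₁

/-- the second factor -/
def Ee (O : Matrix (m ⊕ n) (m ⊕ n) ℝ) : Matrix m n ℝ :=
  O.toBlocks₁₂ * (1 + O.toBlocks₂₂)⁻¹

lemma meas_Ee : Measurable (Ee : Matrix (m ⊕ n) (m ⊕ n) ℝ → Matrix m n ℝ) :=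
  meas_mul (meas_submatrix measurable_id _ _)
    (meas_inv (meas_add measurable_const (meas_submatrix measurable_id _ _)))

lemma meas_Phi : Measurable (Phi : Matrix (m ⊕ n) (m ⊕ n) ℝ → Matrix m m ℝ) :=
  meas_sub (meas_submatrix measurable_id _ _)
    (meas_mul meas_Ee (meas_submatrix measurable_id _ _))

lemma haar_transpose {ν : Measure (Matrix n n ℝ)} (h : IsHaarSO n ν) :
    ν.map (fun O => Oᵀ) = ν := by
  obtain ⟨hp, has, hinv⟩ := h
  have mT : Measurable (fun O : Matrix n n ℝ => Oᵀ) := meas_transpose measurable_id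
  ext s hs
  rw [Measure.map_apply mT hs]
  have mS : MeasurableSet {p : Matrix n n ℝ × Matrix n n ℝ | p.1ᵀ * p.2 ∈ s} :=
    (meas_mul (meas_transpose measurable_fst) measurable_snd) hs
  have h1 := Measure.prod_apply (μ := ν) (ν := ν) mS
  rw [Measure.prod_apply_symm mS] at h1
  have e1 : ∫⁻ x, ν (Prod.mk x ⁻¹' {p : Matrix n n ℝ × Matrix n n ℝ | p.1ᵀ * p.2 ∈ s}) ∂ν
      = ν s := by
    rw [lintegral_congr_ae (g := fun _ => ν s)]
    · simp
    · filter_upwards [has] with X hX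
      have := hinv Xᵀ (by rw [transpose_transpose]; exact mul_eq_one_comm.1 hX.1)
        (by rw [det_transpose]; exact hX.2)
      conv_rhs => rw [← this]
      rw [Measure.map_apply (meas_mulL _) hs]
      rfl
  have e2 : ∫⁻ y, ν ((fun x => (x, y)) ⁻¹' {p : Matrix n n ℝ × Matrix n n ℝ | p.1ᵀ * p.2 ∈ s}) ∂ν
      = ν ((fun O => Oᵀ) ⁻¹' s) := by
    rw [lintegral_congr_ae (g := fun _ => ν ((fun O => Oᵀ) ⁻¹' s))]
    · simp
    · filter_upwards [has] with X hX
      have := hinv Xᵀ (by rw [transpose_transpose]; exact mul_eq_one_comm.1 hX.1)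
        (by rw [det_transpose]; exact hX.2)
      conv_rhs => rw [← this]
      rw [Measure.map_apply (meas_mulL _) (mT hs)]
      congr 1
      ext Y
      simp [transpose_mul]
  rw [← e2, h1, e1]

lemma haar_right {ν : Measure (Matrix n n ℝ)} (h : IsHaarSO n ν) (U : Matrix n n ℝ)
    (hU : Uᵀ * U = 1) (hd : U.det = 1) : ν.map (fun O => O * U) = ν := by
  have ht := haar_transpose h
  have mT : Measurable (fun O : Matrix n n ℝ => Oᵀ) := meas_transpose measurable_id
  have hi := h.2.2 Uᵀ (by rw [transpose_transpose]; exact mul_eq_one_comm.1 hU)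
        (by rw [det_transpose]; exact hd)
  calc ν.map (fun O => O * U) = (ν.map (fun O => Oᵀ)).map (fun O => O * U) := by rw [ht]
    _ = ν.map (fun O => Oᵀ * U) :=
      Measure.map_map (meas_mulR _) mT
    _ = (ν.map (fun O => Uᵀ * O)).map (fun O => Oᵀ) := by
      rw [Measure.map_map mT (meas_mulL _)]
      congr 1
      ext1 O
      simp [transpose_mul]
    _ = ν := by rw [hi, ht]

lemma Phi_so (O : Matrix (m ⊕ n) (m ⊕ n) ℝ) (hO : Oᵀ * O = 1) (hd : O.det = 1)
    (hu : IsUnit (1 + O.toBlocks₂₂)) : (Phi O)ᵀ * Phi O = 1 ∧ (Phi O).det = 1 := by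
  obtain ⟨A, B, C, D, rfl⟩ : ∃ A B C D, O = fromBlocks A B C D :=
    ⟨_, _, _, _, (fromBlocks_toBlocks O).symm⟩
  simp only [Phi, toBlocks_fromBlocks₁₁, toBlocks_fromBlocks₁₂, toBlocks_fromBlocks₂₁,
    toBlocks_fromBlocks₂₂] at hu ⊢
  have hdu : IsUnit (1 + D).det := (Matrix.isUnit_iff_isUnit_det _).1 hu
  constructor
  · set W : Matrix n m ℝ := (1 + D)⁻¹ * C with hW
    have hC : C = W + D * W := by
      have : (1 + D) * W = C := by rw [hW, Matrix.mul_nonsing_inv_cancel_left _ _ hdu]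
      rw [← this, Matrix.add_mul, Matrix.one_mul]
    rw [Matrix.mul_assoc B, ← hW]
    have hK : fromBlocks A B C D * fromRows (1 : Matrix m m ℝ) (-W) = fromRows (A - B * W) W := by
      rw [fromBlocks_mul_fromRows]
      congr 1
      · simp [sub_eq_add_neg]
      · rw [hC]; simp
    have h2 : (fromBlocks A B C D * fromRows (1 : Matrix m m ℝ) (-W))ᵀ * (fromBlocks A B C D * fromRows (1 : Matrix m m ℝ) (-W))
        = (fromRows (1 : Matrix m m ℝ) (-W))ᵀ * fromRows (1 : Matrix m m ℝ) (-W) := by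
      rw [transpose_mul, Matrix.mul_assoc, ← Matrix.mul_assoc _ (fromBlocks A B C D), hO,
        Matrix.one_mul]
    rw [hK, transpose_fromRows, transpose_fromRows, fromCols_mul_fromRows,
      fromCols_mul_fromRows] at h2
    simpa using h2
  · have hi : Invertible (1 + D) := hu.invertible
    have h1 := det_fromBlocks₂₂ A B C (1 + D)
    rw [invOf_eq_nonsing_inv] at h1
    have h2 : (fromBlocks A B C D)ᵀ * fromBlocks A B C (1 + D)
        = fromBlocks 1 Cᵀ 0 (1 + D)ᵀ := by
      have : fromBlocks A B C (1 + D) = fromBlocks A B C D + fromBlocks 0 0 0 1 := by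
        rw [fromBlocks_add]; simp [add_comm]
      rw [this, Matrix.mul_add, hO, fromBlocks_transpose, fromBlocks_multiply, ← fromBlocks_one,
        fromBlocks_add]
      simp
    have h3 := congrArg Matrix.det h2
    rw [det_mul, det_transpose, hd, one_mul, det_fromBlocks_zero₂₁, det_one, one_mul,
      det_transpose, h1] at h3
    exact mul_left_cancel₀ hdu.ne_zero (by rw [h3, mul_one])

lemma diag_so {U : Matrix m m ℝ} (hU : Uᵀ * U = 1) (hd : U.det = 1) :
    (fromBlocks U 0 0 (1 : Matrix n n ℝ))ᵀ * fromBlocks U 0 0 1 = 1 ∧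
    (fromBlocks U 0 0 (1 : Matrix n n ℝ)).det = 1 := by
  constructor
  · rw [fromBlocks_transpose, fromBlocks_multiply, ← fromBlocks_one]
    simp [hU]
  · simp [hd]

lemma Phi_left (U : Matrix m m ℝ) (O : Matrix (m ⊕ n) (m ⊕ n) ℝ) :
    Phi (fromBlocks U 0 0 1 * O) = U * Phi O := by
  obtain ⟨A, B, C, D, rfl⟩ : ∃ A B C D, O = fromBlocks A B C D :=
    ⟨_, _, _, _, (fromBlocks_toBlocks O).symm⟩
  rw [fromBlocks_multiply]
  simp [Phi, Matrix.mul_sub, Matrix.mul_assoc]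

lemma Phi_right (U : Matrix m m ℝ) (O : Matrix (m ⊕ n) (m ⊕ n) ℝ) :
    Phi (O * fromBlocks U 0 0 1) = Phi O * U := by
  obtain ⟨A, B, C, D, rfl⟩ : ∃ A B C D, O = fromBlocks A B C D :=
    ⟨_, _, _, _, (fromBlocks_toBlocks O).symm⟩
  rw [fromBlocks_multiply]
  simp [Phi, Matrix.sub_mul, Matrix.mul_assoc]

lemma Ee_right (U : Matrix m m ℝ) (O : Matrix (m ⊕ n) (m ⊕ n) ℝ) :
    Ee (O * fromBlocks U 0 0 1) = Ee O := by
  obtain ⟨A, B, C, D, rfl⟩ : ∃ A B C D, O = fromBlocks A B C D :=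
    ⟨_, _, _, _, (fromBlocks_toBlocks O).symm⟩
  rw [fromBlocks_multiply]
  simp [Ee]

lemma meas_so : MeasurableSet {O : Matrix n n ℝ | Oᵀ * O = 1 ∧ O.det = 1} := by
  have : {O : Matrix n n ℝ | Oᵀ * O = 1 ∧ O.det = 1} =
      (⋂ i, ⋂ j, {O : Matrix n n ℝ | (Oᵀ * O) i j = (1 : Matrix n n ℝ) i j}) ∩ {O | O.det = 1} := by
    ext O
    simp [← Matrix.ext_iff]
  rw [this]
  refine MeasurableSet.inter (MeasurableSet.iInter fun i => MeasurableSet.iInter fun j => ?_) ?_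
  · exact measurableSet_eq_fun
      (meas_iff.1 (meas_mul (meas_transpose measurable_id) measurable_id) i j) measurable_const
  · exact measurableSet_eq_fun (meas_det measurable_id) measurable_const

lemma Phi_haar {ν : Measure (Matrix (m ⊕ n) (m ⊕ n) ℝ)} (h : IsHaarSO (m ⊕ n) ν)
    (hu : ∀ᵐ O ∂ν, IsUnit (1 + O.toBlocks₂₂)) : IsHaarSO m (ν.map Phi) := by
  obtain ⟨hp, has, hinv⟩ := h
  refine ⟨Measure.isProbabilityMeasure_map meas_Phi.aemeasurable, ?_, ?_⟩
  · rw [ae_map_iff meas_Phi.aemeasurable meas_so]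
    filter_upwards [has, hu] with O h1 h2
    exact Phi_so O h1.1 h1.2 h2
  · intro U hU hd
    have hh := hinv _ (diag_so (n := n) hU hd).1 (diag_so (n := n) hU hd).2
    rw [Measure.map_map (meas_mulL _) meas_Phi]
    conv_rhs => rw [← hh]
    rw [Measure.map_map meas_Phi (meas_mulL _)]
    congr 1
    ext1 O
    exact (Phi_left U O).symm

lemma Phi_indep {ν : Measure (Matrix (m ⊕ n) (m ⊕ n) ℝ)} (h : IsHaarSO (m ⊕ n) ν)
    (hu : ∀ᵐ O ∂ν, IsUnit (1 + O.toBlocks₂₂)) {s : Set (Matrix m m ℝ)} {t : Set (Matrix m n ℝ)}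
    (hs : MeasurableSet s) (ht : MeasurableSet t) :
    ν (Phi ⁻¹' s ∩ Ee ⁻¹' t) = ν (Phi ⁻¹' s) * ν (Ee ⁻¹' t) := by
  have hκ := Phi_haar h hu
  set κ := ν.map Phi with hκd
  have hp := h.1
  have hpκ := hκ.1
  have mS : MeasurableSet {p : Matrix m m ℝ × Matrix (m ⊕ n) (m ⊕ n) ℝ |
      Phi p.2 * p.1 ∈ s ∧ Ee p.2 ∈ t} :=
    ((meas_mul (meas_Phi.comp measurable_snd) measurable_fst) hs).inter
      ((meas_Ee.comp measurable_snd) ht)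
  have h1 := Measure.prod_apply (μ := κ) (ν := ν) mS
  rw [Measure.prod_apply_symm mS] at h1
  rw [lintegral_congr_ae (g := (Ee ⁻¹' t).indicator fun _ => κ s),
    lintegral_indicator_const (meas_Ee ht), lintegral_congr_ae (μ := κ)
      (g := fun _ => ν (Phi ⁻¹' s ∩ Ee ⁻¹' t))] at h1
  · rw [← Measure.map_apply meas_Phi hs, ← hκd, h1]
    simp
  · filter_upwards [hκ.2.1] with U hU
    have hd := diag_so (n := n) hU.1 hU.2
    have hr := haar_right h _ hd.1 hd.2
    conv_rhs => rw [← hr]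
    rw [Measure.map_apply (meas_mulR _)
      ((meas_Phi hs).inter (meas_Ee ht))]
    congr 1
    ext O
    simp [Phi_right, Ee_right]
  · filter_upwards [h.2.1, hu] with O h1 h2
    have hO := Phi_so O h1.1 h1.2 h2
    by_cases hE : Ee O ∈ t
    · rw [Set.indicator_of_mem (by exact hE)]
      conv_rhs => rw [← hκ.2.2 _ hO.1 hO.2]
      rw [Measure.map_apply (meas_mulL _) hs]
      congr 1
      ext U
      simp [hE]
    · rw [Set.indicator_of_notMem (by exact hE)]
      simp [hE]

/-- Householder reflection (normalised vector not required, `c = 2 / |v|²`). -/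
def hh (v : n → ℝ) : Matrix n n ℝ := 1 - (2 / (v ⬝ᵥ v)) • vecMulVec v v

lemma hh_orth (v : n → ℝ) (hv : v ⬝ᵥ v ≠ 0) : (hh v)ᵀ * hh v = 1 := by
  have hT : (hh v)ᵀ = hh v := by simp [hh, transpose_sub, transpose_smul, transpose_vecMulVec]
  rw [hT, hh, Matrix.sub_mul, Matrix.mul_sub, Matrix.smul_mul, Matrix.mul_smul, Matrix.mul_sub,
    Matrix.mul_smul, vecMulVec_mul_vecMulVec]
  ext i j
  simp [vecMulVec_apply]
  field_simp
  ring

lemma hh_det (v : n → ℝ) (hv : v ⬝ᵥ v ≠ 0) : (hh v).det = -1 := by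
  have : hh v = 1 + replicateCol Unit v * replicateRow Unit (-(2 / (v ⬝ᵥ v)) • v) := by
    ext i j
    simp [hh, vecMulVec_apply, Matrix.mul_apply]
    ring
  rw [this, det_one_add_replicateCol_mul_replicateRow, smul_dotProduct, smul_eq_mul]
  field_simp
  norm_num

lemma exists_rot (i j : n) (hij : i ≠ j) (t : ℝ) : ∃ U : Matrix n n ℝ,
    Uᵀ * U = 1 ∧ U.det = 1 ∧ U i i = 1 - 2 / (1 + t ^ 2) := by
  obtain ⟨w, hw⟩ : ∃ w : n → ℝ, w = Pi.single j 1 := ⟨_, rfl⟩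
  obtain ⟨v, hv⟩ : ∃ v : n → ℝ, v = Pi.single i 1 + t • Pi.single j 1 := ⟨_, rfl⟩
  have hvv : v ⬝ᵥ v = 1 + t ^ 2 := by
    simp [hv, add_dotProduct, hij, hij.symm]
    ring
  have hww : w ⬝ᵥ w = 1 := by simp [hw]
  have hv0 : v ⬝ᵥ v ≠ 0 := by rw [hvv]; positivity
  have hw0 : w ⬝ᵥ w ≠ 0 := by rw [hww]; norm_num
  refine ⟨hh v * hh w, ?_, ?_, ?_⟩
  · rw [transpose_mul, Matrix.mul_assoc, ← Matrix.mul_assoc _ (hh v), hh_orth v hv0,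
      Matrix.one_mul, hh_orth w hw0]
  · rw [det_mul, hh_det v hv0, hh_det w hw0]; norm_num
  · rw [hh.eq_1 w, Matrix.mul_sub, Matrix.mul_one, Matrix.mul_smul, mul_vecMulVec]
    have hvi : v i = 1 := by simp [hv, hij]
    have hwi : w i = 0 := by simp [hw, hij]
    simp [vecMulVec_apply, hh, hvv, hvi, hwi]

lemma haar_entry {ν : Measure (Matrix n n ℝ)} (h : IsHaarSO n ν) (i j : n) (hij : i ≠ j) :
    ∀ᵐ O ∂ν, O i i ≠ -1 := by
  have hp := h.1
  choose U hU hd hUi using fun k : ℕ => exists_rot i j hij (k : ℝ)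
  set F : Set (Matrix n n ℝ) := {O | ∀ r, O r i = -(1 : Matrix n n ℝ) r i} with hF
  have mF : MeasurableSet F := by
    have : F = ⋂ r, {O | O r i = -(1 : Matrix n n ℝ) r i} := by ext; simp [hF]
    rw [this]
    exact MeasurableSet.iInter fun r => measurableSet_eq_fun (meas_entry _ _) measurable_const
  have mU : ∀ k, Measurable fun O : Matrix n n ℝ => (U k)ᵀ * O :=
    fun k => meas_mul measurable_const measurable_id
  set G : ℕ → Set (Matrix n n ℝ) := fun k => (fun O => (U k)ᵀ * O) ⁻¹' F with hG
  have hGν : ∀ k, ν (G k) = ν F := by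
    intro k
    rw [hG, ← Measure.map_apply (mU k) mF, h.2.2]
    · rw [transpose_transpose]; exact mul_eq_one_comm.1 (hU k)
    · rw [det_transpose, hd]
  have hGi : ∀ k, ∀ O ∈ G k, O i i = -(1 - 2 / (1 + (k : ℝ) ^ 2)) := by
    intro k O hO
    have h1 : O = U k * ((U k)ᵀ * O) := by
      rw [← Matrix.mul_assoc, mul_eq_one_comm.1 (hU k), Matrix.one_mul]
    have h2 : ∀ r, ((U k)ᵀ * O) r i = -(1 : Matrix n n ℝ) r i := hO
    rw [h1, Matrix.mul_apply]
    simp only [h2, ← hUi k]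
    simp [Matrix.one_apply]
  have hdisj : Pairwise (Function.onFun Disjoint G) := by
    intro k l hkl
    refine Set.disjoint_left.2 fun O h1 h2 => hkl ?_
    have h3 := (hGi k O h1).symm.trans (hGi l O h2)
    have hk : (0 : ℝ) < 1 + (k : ℝ) ^ 2 := by positivity
    have hl : (0 : ℝ) < 1 + (l : ℝ) ^ 2 := by positivity
    have h4 : 2 / (1 + (k : ℝ) ^ 2) = 2 / (1 + (l : ℝ) ^ 2) := by linarith
    rw [div_eq_div_iff hk.ne' hl.ne'] at h4
    have h5 : (k : ℝ) ^ 2 = (l : ℝ) ^ 2 := by linarith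
    have h6 := (pow_left_inj₀ (Nat.cast_nonneg k) (Nat.cast_nonneg l) two_ne_zero).1 h5
    exact_mod_cast h6
  have hF0 : ν F = 0 := by
    by_contra hne
    have h1 := measure_iUnion (μ := ν) hdisj fun k => mU k mF
    simp only [hGν, ENNReal.tsum_const_eq_top_of_ne_zero hne] at h1
    exact measure_ne_top _ _ h1
  have hF1 : ∀ᵐ O ∂ν, O ∉ F := measure_eq_zero_iff_ae_notMem.1 hF0
  filter_upwards [hF1, h.2.1] with O hO hso hi
  apply hO
  have h1 := congrFun (congrFun hso.1 i) i
  rw [Matrix.mul_apply, one_apply_eq, ← Finset.add_sum_erase _ _ (Finset.mem_univ i)] at h1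
  simp only [transpose_apply, hi] at h1
  have h2 : ∑ r ∈ Finset.univ.erase i, O r i * O r i = 0 := by linarith
  rw [Finset.sum_eq_zero_iff_of_nonneg fun r _ => mul_self_nonneg _] at h2
  intro r
  by_cases hr : r = i
  · subst hr; simp [hi]
  · simpa [Matrix.one_apply, hr] using h2 r (by simp [hr])

lemma haar_submatrix {ν : Measure (Matrix n n ℝ)} (h : IsHaarSO n ν) (e : m ≃ n) :
    IsHaarSO m (ν.map fun O => O.submatrix e e) := by
  have hp := h.1
  have mS : Measurable fun O : Matrix n n ℝ => O.submatrix e e := meas_submatrix measurable_id _ _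
  refine ⟨Measure.isProbabilityMeasure_map mS.aemeasurable, ?_, ?_⟩
  · rw [ae_map_iff mS.aemeasurable meas_so]
    filter_upwards [h.2.1] with O hO
    refine ⟨?_, ?_⟩
    · rw [transpose_submatrix, submatrix_mul_equiv, hO.1, submatrix_one_equiv]
    · rw [det_submatrix_equiv_self, hO.2]
  · intro U hU hd
    have hr := h.2.2 (U.submatrix e.symm e.symm)
      (by rw [transpose_submatrix, submatrix_mul_equiv, hU, submatrix_one_equiv])
      (by rw [det_submatrix_equiv_self, hd])
    rw [Measure.map_map (meas_mulL _) mS]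
    conv_rhs => rw [← hr]
    rw [Measure.map_map mS (meas_mulL _)]
    congr 1
    ext1 O
    simp only [Function.comp]
    rw [← submatrix_mul_equiv _ _ _ e, submatrix_submatrix]
    simp

end Core

lemma ae_isUnit (N : ℕ) : ∀ (m : Type) [Fintype m] [DecidableEq m] [Nonempty m]
    (ν : Measure (Matrix (m ⊕ Fin N) (m ⊕ Fin N) ℝ)), IsHaarSO (m ⊕ Fin N) ν →
    ∀ᵐ O ∂ν, IsUnit (1 + O.toBlocks₂₂) := by
  induction N with
  | zero =>
    intro m _ _ _ ν h
    filter_upwards with O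
    exact isUnit_of_subsingleton _
  | succ N ih =>
    intro m _ _ _ ν h
    let e' : Unit ⊕ Fin N ≃ Fin (N + 1) := Fintype.equivOfCardEq (by simp [add_comm])
    let e : (m ⊕ Unit) ⊕ Fin N ≃ m ⊕ Fin (N + 1) :=
      (Equiv.sumAssoc m Unit (Fin N)).trans (Equiv.sumCongr (Equiv.refl m) e')
    have mS : Measurable fun O : Matrix (m ⊕ Fin (N + 1)) (m ⊕ Fin (N + 1)) ℝ =>
      O.submatrix e e := meas_submatrix measurable_id _ _
    have h' := haar_submatrix h e
    have hu := ih (m ⊕ Unit) _ h'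
    have hP := Phi_haar h' hu
    have hent := haar_entry hP (Sum.inr ()) (Sum.inl (Classical.arbitrary m)) (by simp)
    have hu2 := ae_of_ae_map mS.aemeasurable hu
    have hent2 := ae_of_ae_map mS.aemeasurable (ae_of_ae_map meas_Phi.aemeasurable hent)
    filter_upwards [hu2, hent2] with O h1 h2
    have hi := h1.invertible
    set O' := O.submatrix e e with hO'
    have key : (1 + O.toBlocks₂₂).submatrix e' e' =
        fromBlocks (1 + O'.toBlocks₁₁.toBlocks₂₂) (O'.toBlocks₁₂.submatrix Sum.inr id)
          (O'.toBlocks₂₁.submatrix id Sum.inr) (1 + O'.toBlocks₂₂) := by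
      ext a b
      rcases a with a | a <;> rcases b with b | b <;>
        simp [hO', toBlocks₂₂, toBlocks₁₁, toBlocks₁₂, toBlocks₂₁, e, Matrix.one_apply]
    rw [Matrix.isUnit_iff_isUnit_det, ← det_submatrix_equiv_self e', key, det_fromBlocks₂₂,
      invOf_eq_nonsing_inv]
    refine ((Matrix.isUnit_iff_isUnit_det _).1 h1).mul ?_
    rw [isUnit_iff_ne_zero, det_unique]
    intro h3
    apply h2
    have : Phi O' (Sum.inr ()) (Sum.inr ()) = O'.toBlocks₁₁.toBlocks₂₂ () ()
        - (O'.toBlocks₁₂.submatrix Sum.inr id * (1 + O'.toBlocks₂₂)⁻¹ *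
          O'.toBlocks₂₁.submatrix id Sum.inr) () () := by
      simp only [Phi, Matrix.sub_apply]
      rfl
    rw [this]
    simp only [Matrix.sub_apply, Matrix.add_apply, PUnit.default_eq_unit, one_apply_eq] at h3
    linarith

/-- Let `T̄ = M + N` and let `O = [[A, B], [C, D]]` be a uniformly random (Haar) `T̄×T̄`
orthogonal matrix of determinant `1`, with `A` of size `M×M` and `D` of size `N×N`. Then almost
surely `1 + D` is invertible, the matrix `Õ = A − B(1+D)⁻¹C` is a uniformly random (Haar)
`M×M` orthogonal matrix of determinant `1`, and `Õ` is independent of `B(1+D)⁻¹`. -/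
theorem haar_block_projection (M N : ℕ) (hM : 0 < M) (hN : 0 < N)
    (Ω : Type*) [MeasurableSpace Ω] (P : Measure Ω) [IsProbabilityMeasure P]
    (O : Ω → Matrix (Fin M ⊕ Fin N) (Fin M ⊕ Fin N) ℝ) (hmeas : Measurable O)
    (hlaw : IsHaarSO (Fin M ⊕ Fin N) (P.map O)) :
    (∀ᵐ ω ∂P, IsUnit (1 + (O ω).toBlocks₂₂)) ∧
    IsHaarSO (Fin M)
      (P.map fun ω =>
        (O ω).toBlocks₁₁ - (O ω).toBlocks₁₂ * (1 + (O ω).toBlocks₂₂)⁻¹ * (O ω).toBlocks₂₁) ∧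
    IndepFun
      (fun ω =>
        (O ω).toBlocks₁₁ - (O ω).toBlocks₁₂ * (1 + (O ω).toBlocks₂₂)⁻¹ * (O ω).toBlocks₂₁)
      (fun ω => (O ω).toBlocks₁₂ * (1 + (O ω).toBlocks₂₂)⁻¹) P := by
  have : Nonempty (Fin M) := ⟨⟨0, hM⟩⟩
  have hu := ae_isUnit N (Fin M) _ hlaw
  have hP := Phi_haar hlaw hu
  refine ⟨ae_of_ae_map hmeas.aemeasurable hu, ?_, ?_⟩
  · rw [Measure.map_map meas_Phi hmeas] at hP
    exact hP
  · rw [indepFun_iff_measure_inter_preimage_eq_mul]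
    intro s t hs ht
    have h1 := Phi_indep hlaw hu hs ht
    rw [Measure.map_apply hmeas ((meas_Phi hs).inter (meas_Ee ht)),
      Measure.map_apply hmeas (meas_Phi hs), Measure.map_apply hmeas (meas_Ee ht)] at h1
    exact h1


end
end

section
/- Let M and N be positive integers, T̄ = M + N, and let O = [[A, B],[C, D]] be a uniformly random (Haar-distributed) T̄×T̄ orthogonal matrix of determinant 1, in block form with A of size M×M and D of size N×N. Then the law of the M×N random matrix Ŵ := B(1_N + D)^{−1} is absolutely continuous with respect to Lebesgue measure on M×N real matrices, with density proportional to det(1_N + Ŵ*Ŵ)^{1/2 − M − N/2}. -/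
open MeasureTheory ProbabilityTheory Matrix

noncomputable section

instance matMeas (m n : Type*) [Fintype m] [Fintype n] : MeasureSpace (Matrix m n ℝ) :=
  (inferInstance : MeasureSpace (m → n → ℝ))

/-- Strictly upper-triangular index pairs (for some enumeration of `n`). -/
abbrev SkIdx (n : Type*) [Fintype n] : Type _ :=
  {p : n × n // Fintype.equivFin n p.1 < Fintype.equivFin n p.2}

/-- Coordinates for skew-symmetric matrices. -/
abbrev SkE (n : Type*) [Fintype n] : Type _ := SkIdx n → ℝ

/-- The skew-symmetric matrix with given coordinates. -/
def sk {n : Type*} [Fintype n] : SkE n →ₗ[ℝ] Matrix n n ℝ where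
  toFun v := Matrix.of fun i j =>
    if h : Fintype.equivFin n i < Fintype.equivFin n j then v ⟨(i, j), h⟩
    else if h : Fintype.equivFin n j < Fintype.equivFin n i then - v ⟨(j, i), h⟩ else 0
  map_add' v w := by
    ext i j
    simp only [Matrix.of_apply, Matrix.add_apply]
    split_ifs <;> simp <;> ring
  map_smul' c v := by
    ext i j
    simp only [Matrix.of_apply, Matrix.smul_apply]
    split_ifs <;> simp

/-- Read off the coordinates of a matrix. -/
def up {n : Type*} [Fintype n] : Matrix n n ℝ →ₗ[ℝ] SkE n where
  toFun A p := A p.1.1 p.1.2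
  map_add' _ _ := rfl
  map_smul' _ _ := rfl

section
variable {n : Type*} [Fintype n]

lemma up_apply (A : Matrix n n ℝ) (p : SkIdx n) : up A p = A p.1.1 p.1.2 := rfl

lemma sk_apply (v : SkE n) (i j : n) : sk v i j =
    if h : Fintype.equivFin n i < Fintype.equivFin n j then v ⟨(i, j), h⟩
    else if h : Fintype.equivFin n j < Fintype.equivFin n i then - v ⟨(j, i), h⟩ else 0 := rfl

lemma up_sk (v : SkE n) : up (sk v) = v := by
  funext p
  simp [up_apply, sk_apply, p.2]

lemma sk_transpose (v : SkE n) : (sk v)ᵀ = - sk v := by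
  ext i j
  simp only [sk, Matrix.transpose_apply, LinearMap.coe_mk, AddHom.coe_mk, Matrix.of_apply,
    Matrix.neg_apply]
  rcases lt_trichotomy (Fintype.equivFin n i) (Fintype.equivFin n j) with h | h | h
  · simp [h, not_lt_of_gt h]
  · simp [h]
  · simp [h, not_lt_of_gt h]

lemma sk_up {A : Matrix n n ℝ} (hA : Aᵀ = -A) : sk (up A) = A := by
  have hA' : ∀ i j, A j i = - A i j := fun i j => by
    have := congrFun (congrFun hA i) j
    simpa using this
  ext i j
  simp only [sk_apply, up_apply]
  rcases lt_trichotomy (Fintype.equivFin n i) (Fintype.equivFin n j) with h | h | h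
  · simp [h]
  · have : i = j := (Fintype.equivFin n).injective h
    subst this
    have := hA' i i
    simp; linarith
  · simp [h, not_lt_of_gt h, hA' i j]

/-- The congruence action on skew matrices. -/
def Lq (Q : Matrix n n ℝ) : SkE n →ₗ[ℝ] SkE n where
  toFun v := up (Qᵀ * sk v * Q)
  map_add' v w := by simp [Matrix.mul_add, Matrix.add_mul]
  map_smul' c v := by simp

lemma Lq_apply (Q : Matrix n n ℝ) (v : SkE n) : Lq Q v = up (Qᵀ * sk v * Q) := rfl

lemma sk_Lq (Q : Matrix n n ℝ) (v : SkE n) : sk (Lq Q v) = Qᵀ * sk v * Q := by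
  rw [Lq_apply, sk_up]
  simp [Matrix.transpose_mul, sk_transpose, Matrix.mul_assoc]

lemma Lq_mul (Q R : Matrix n n ℝ) : Lq (Q * R) = Lq R ∘ₗ Lq Q := by
  ext1 v
  ext1
  simp only [LinearMap.comp_apply]
  rw [Lq_apply, Lq_apply R, sk_Lq]
  simp [Matrix.transpose_mul, Matrix.mul_assoc]

variable [DecidableEq n]

lemma prod_SkIdx (d : n → ℝ) :
    ∏ p : SkIdx n, (d p.1.1 * d p.1.2) = (∏ i, d i) ^ (Fintype.card n - 1) := by
  classical
  have h1 : ∏ p : SkIdx n, (d p.1.1 * d p.1.2)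
      = ∏ p ∈ Finset.univ.filter
          (fun p : n × n => Fintype.equivFin n p.1 < Fintype.equivFin n p.2), (d p.1 * d p.2) := by
    rw [Finset.prod_subtype (p := fun p : n × n => Fintype.equivFin n p.1 < Fintype.equivFin n p.2)
      (f := fun p : n × n => d p.1 * d p.2)]
    simp
  have h2 : ∏ p ∈ Finset.univ.filter
          (fun p : n × n => Fintype.equivFin n p.1 < Fintype.equivFin n p.2), d p.2
      = ∏ p ∈ Finset.univ.filter
          (fun p : n × n => Fintype.equivFin n p.2 < Fintype.equivFin n p.1), d p.1 := by
    refine Finset.prod_nbij' Prod.swap Prod.swap ?_ ?_ ?_ ?_ ?_ <;> simp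
  have h3 : (Finset.univ.filter
          (fun p : n × n => Fintype.equivFin n p.1 < Fintype.equivFin n p.2)) ∪
        (Finset.univ.filter
          (fun p : n × n => Fintype.equivFin n p.2 < Fintype.equivFin n p.1))
        = Finset.univ.filter (fun p : n × n => p.1 ≠ p.2) := by
    ext p
    simp only [Finset.mem_union, Finset.mem_filter, Finset.mem_univ, true_and]
    rw [← lt_or_lt_iff_ne.trans (Fintype.equivFin n).injective.ne_iff]
  rw [h1, Finset.prod_mul_distrib, h2, ← Finset.prod_union, h3, Finset.prod_filter,
    Fintype.prod_prod_type, ← Finset.prod_pow]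
  · refine Finset.prod_congr rfl fun i _ => ?_
    simp only
    rw [← Finset.prod_filter, Finset.prod_const]
    congr 1
    rw [Finset.filter_ne, Finset.card_erase_of_mem (Finset.mem_univ _), Finset.card_univ]
  · rw [Finset.disjoint_filter]
    intro p _ h h'
    exact absurd h (not_lt_of_gt h')

lemma Lq_one : Lq (1 : Matrix n n ℝ) = LinearMap.id := by
  ext1 v
  ext1
  simp [Lq_apply, up_sk]

lemma det_Lq_diagonal (d : n → ℝ) :
    LinearMap.det (Lq (Matrix.diagonal d)) = (Matrix.diagonal d).det ^ (Fintype.card n - 1) := by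
  have : Lq (Matrix.diagonal d) = Matrix.toLin' (Matrix.diagonal fun p : SkIdx n => d p.1.1 * d p.1.2) := by
    apply LinearMap.ext
    intro v
    funext p
    have h := congrFun (up_sk v) p
    simp only [up_apply] at h
    simp [Lq_apply, up_apply, Matrix.mulVec_diagonal, h, Matrix.toLin'_apply]
    ring
  rw [this, LinearMap.det_toLin', Matrix.det_diagonal, Matrix.det_diagonal, prod_SkIdx]

lemma det_Lq_mul (Q R : Matrix n n ℝ) :
    LinearMap.det (Lq (Q * R)) = LinearMap.det (Lq Q) * LinearMap.det (Lq R) := by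
  rw [Lq_mul, LinearMap.det_comp, mul_comm]

lemma det_Lq_transvection (i j : n) (hij : i ≠ j) (c : ℝ) :
    LinearMap.det (Lq (Matrix.transvection i j c)) = 1 := by
  set D : Matrix n n ℝ := Matrix.diagonal (Function.update 1 i 2) with hD
  have hDdet : D.det ≠ 0 := by
    rw [hD, Matrix.det_diagonal, Finset.prod_ne_zero_iff]
    intro a _
    by_cases h : a = i
    · subst h; simp
    · simp [h]
  have hcomm : D * Matrix.transvection i j c = Matrix.transvection i j (2 * c) * D := by
    ext a b
    simp only [hD, Matrix.transvection, Matrix.diagonal_mul, Matrix.mul_diagonal,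
      Matrix.add_apply, Matrix.one_apply, Matrix.single_apply]
    by_cases ha : a = i
    · subst ha
      by_cases hb : b = j
      · subst hb; simp [hij, hij.symm]
      · by_cases hab : a = b
        · subst hab; simp [Ne.symm hb]
        · simp [hab, Ne.symm hb]
    · by_cases hab : a = b
      · subst hab; simp [ha, Ne.symm ha]
      · simp [ha, Ne.symm ha, hab]
  have hsq : Matrix.transvection i j (2 * c) =
      Matrix.transvection i j c * Matrix.transvection i j c := by
    rw [Matrix.transvection_mul_transvection_same _ _ hij, two_mul]
  have h1 := congrArg (fun A => LinearMap.det (Lq A)) hcomm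
  simp only [det_Lq_mul, hsq] at h1
  have hDL : LinearMap.det (Lq D) ≠ 0 := by
    rw [hD, det_Lq_diagonal]
    exact pow_ne_zero _ hDdet
  have hT : LinearMap.det (Lq (Matrix.transvection i j c)) ≠ 0 := by
    have h2 : LinearMap.det (Lq (Matrix.transvection i j c)) *
        LinearMap.det (Lq (Matrix.transvection i j (-c))) = 1 := by
      rw [← det_Lq_mul, Matrix.transvection_mul_transvection_same _ _ hij]
      simp [Lq_one]
    exact left_ne_zero_of_mul_eq_one h2
  have h3 : LinearMap.det (Lq (Matrix.transvection i j c)) * (LinearMap.det (Lq D)) * 1 =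
     LinearMap.det (Lq (Matrix.transvection i j c)) * (LinearMap.det (Lq D)) *
      LinearMap.det (Lq (Matrix.transvection i j c)) := by linarith
  exact (mul_left_cancel₀ (mul_ne_zero hT hDL) h3).symm

lemma det_Lq (Q : Matrix n n ℝ) (hQ : Q.det ≠ 0) :
    LinearMap.det (Lq Q) = Q.det ^ (Fintype.card n - 1) := by
  refine Matrix.diagonal_transvection_induction_of_det_ne_zero
    (fun Q => LinearMap.det (Lq Q) = Q.det ^ (Fintype.card n - 1)) Q hQ ?_ ?_ ?_
  · intro d _; exact det_Lq_diagonal d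
  · rintro ⟨i, j, hij, c⟩
    simp only [Matrix.TransvectionStruct.toMatrix_mk]
    rw [det_Lq_transvection i j hij, Matrix.det_transvection_of_ne _ _ hij, one_pow]
  · intro A B _ _ hA hB
    rw [det_Lq_mul, hA, hB, Matrix.det_mul, mul_pow]

end

/-- Cayley transform. -/
def cy {n : Type*} [Fintype n] [DecidableEq n] (A : Matrix n n ℝ) : Matrix n n ℝ :=
  (2 : ℝ) • (1 + A)⁻¹ - 1

section
variable {n : Type*} [Fintype n] [DecidableEq n]

lemma det_one_add_skew {X : Matrix n n ℝ} (hX : Xᵀ = -X) : (1 + X).det ≠ 0 := by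
  intro h
  obtain ⟨u, hu, h0⟩ := Matrix.exists_mulVec_eq_zero_iff.mpr h
  apply hu
  rw [Matrix.add_mulVec, Matrix.one_mulVec] at h0
  have h1 : u ⬝ᵥ (X *ᵥ u) = 0 := by
    have h2 : u ⬝ᵥ (X *ᵥ u) = - (u ⬝ᵥ (X *ᵥ u)) := by
      conv_lhs => rw [Matrix.dotProduct_mulVec, ← Matrix.mulVec_transpose, hX, Matrix.neg_mulVec,
        neg_dotProduct, dotProduct_comm]
    linarith
  have h3 := congrArg (fun w => u ⬝ᵥ w) h0
  simp only [dotProduct_add, h1, add_zero, dotProduct_zero] at h3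
  exact dotProduct_self_eq_zero.mp h3

lemma one_add_cy (A : Matrix n n ℝ) : 1 + cy A = (2 : ℝ) • (1 + A)⁻¹ := by
  simp [cy]

lemma det_one_add_cy (A : Matrix n n ℝ) :
    (1 + cy A).det = 2 ^ Fintype.card n * ((1 + A).det)⁻¹ := by
  rw [one_add_cy, Matrix.det_smul, Matrix.det_nonsing_inv, Ring.inverse_eq_inv']

lemma det_one_add_cy_ne {A : Matrix n n ℝ} (hA : (1 + A).det ≠ 0) : (1 + cy A).det ≠ 0 := by
  rw [det_one_add_cy]
  positivity

lemma cy_cy {A : Matrix n n ℝ} (hA : (1 + A).det ≠ 0) : cy (cy A) = A := by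
  have h : IsUnit (1 + A).det := hA.isUnit
  have h' : IsUnit (1 + A)⁻¹.det := by
    rw [Matrix.det_nonsing_inv]; exact h.ringInverse
  have h1 : ((2 : ℝ) • (1 + A)⁻¹)⁻¹ = (2 : ℝ)⁻¹ • (1 + A) := by
    apply Matrix.inv_eq_right_inv
    rw [Matrix.smul_mul, Matrix.mul_smul, smul_smul, Matrix.nonsing_inv_mul _ h]
    norm_num
  rw [cy, one_add_cy, h1, smul_smul]
  norm_num

lemma cy_mul {A : Matrix n n ℝ} (hA : (1 + A).det ≠ 0) : cy A * (1 + A) = 1 - A := by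
  rw [cy, sub_mul, Matrix.smul_mul, Matrix.nonsing_inv_mul _ hA.isUnit, two_smul]
  simp

lemma mul_cy {A : Matrix n n ℝ} (hA : (1 + A).det ≠ 0) : (1 + A) * cy A = 1 - A := by
  rw [cy, mul_sub, Matrix.mul_smul, Matrix.mul_nonsing_inv _ hA.isUnit, two_smul]
  simp

lemma cy_orth {X : Matrix n n ℝ} (hX : Xᵀ = -X) : (cy X)ᵀ * cy X = 1 := by
  have h := det_one_add_skew hX
  have hX' : (-X)ᵀ = -(-X) := by simp [hX]
  have h' := det_one_add_skew hX'
  have e1 : (cy X)ᵀ = cy (-X) := by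
    simp [cy, Matrix.transpose_nonsing_inv, hX]
  have e2 := mul_cy h
  have e3 := cy_mul h'
  have u : IsUnit (1 - X).det := by rw [sub_eq_add_neg]; exact h'.isUnit
  -- cy(-X) (1 - X) = 1 + X
  have e4 : (cy X)ᵀ * ((1 - X) * (cy X * (1 + X))) = (1 - X) * (1 + X) := by
    rw [e1, ← Matrix.mul_assoc, sub_eq_add_neg, e3, cy_mul h]
    noncomm_ring
  have hc : cy X * (1 - X) = (1 - X) * cy X := by
    have : cy X * (1 + X) = (1 + X) * cy X := by rw [cy_mul h, mul_cy h]
    have h2 : cy X * X = X * cy X := by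
      simpa [mul_add, add_mul] using this
    simp [mul_sub, sub_mul, h2]
  have e5 : (cy X)ᵀ * cy X * ((1 - X) * (1 + X)) = 1 * ((1 - X) * (1 + X)) := by
    have e6 : (cy X)ᵀ * cy X * ((1 - X) * (1 + X)) = (cy X)ᵀ * ((1 - X) * (cy X * (1 + X))) := by
      simp only [← Matrix.mul_assoc]
      rw [Matrix.mul_assoc (cy X)ᵀ (cy X) (1 - X), hc]
      simp only [← Matrix.mul_assoc]
    rw [one_mul, e6, e4]
  have uu : IsUnit ((1 - X) * (1 + X)) := by
    rw [Matrix.isUnit_iff_isUnit_det, Matrix.det_mul]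
    exact u.mul h.isUnit
  exact uu.mul_right_cancel e5

lemma cy_det {X : Matrix n n ℝ} (hX : Xᵀ = -X) : (cy X).det = 1 := by
  have h := det_one_add_skew hX
  have e := congrArg Matrix.det (cy_mul h)
  rw [Matrix.det_mul] at e
  have : (1 - X).det = (1 + X).det := by
    rw [← Matrix.det_transpose (1 + X)]
    simp [hX, sub_eq_add_neg]
  rw [this] at e
  exact mul_right_cancel₀ h (by rw [e, one_mul])

lemma cy_skew {O : Matrix n n ℝ} (hO : Oᵀ * O = 1) (h : (1 + O).det ≠ 0) :
    (cy O)ᵀ = - cy O := by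
  have hO' : O * Oᵀ = 1 := mul_eq_one_comm.mp hO
  have h2 : (1 + Oᵀ).det ≠ 0 := by
    rw [← Matrix.det_transpose]; simpa using h
  have e1 : (cy O)ᵀ = cy (Oᵀ) := by
    simp [cy, Matrix.transpose_nonsing_inv]
  rw [e1]
  have uu : IsUnit (1 + Oᵀ) := by
    rw [Matrix.isUnit_iff_isUnit_det]
    exact h2.isUnit
  have uo : IsUnit (1 + O) := by
    rw [Matrix.isUnit_iff_isUnit_det]
    exact h.isUnit
  have e3 : (1 + Oᵀ) = Oᵀ * (1 + O) := by rw [mul_add, hO]; simp [add_comm]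
  apply uu.mul_left_cancel
  rw [mul_cy h2]
  rw [e3, mul_neg, Matrix.mul_assoc, mul_cy h, mul_sub, hO]
  simp

lemma cayley_Q {X U : Matrix n n ℝ} (hX : Xᵀ = -X) (hU : Uᵀ * U = 1)
    (h : (1 + cy X * U).det ≠ 0) :
    ((2 : ℝ) • ((1 + X)⁻¹ * U * (1 + cy X * U)⁻¹))ᵀ
      = (2 : ℝ) • ((1 + cy X * U)⁻¹ * (1 + X)⁻¹) := by
  have hx := det_one_add_skew hX
  have hX' : (-X)ᵀ = -(-X) := by simp [hX]
  have hx' := det_one_add_skew hX'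
  have hU' : U * Uᵀ = 1 := mul_eq_one_comm.mp hU
  have hO := cy_orth hX
  set O := cy X with hOdef
  have hOO : (O * U)ᵀ * (O * U) = 1 := by
    rw [Matrix.transpose_mul, Matrix.mul_assoc, ← Matrix.mul_assoc Oᵀ, hO, one_mul, hU]
  have h2 : (1 + (O * U)ᵀ).det ≠ 0 := by
    rw [← Matrix.det_transpose]; simpa using h
  rw [Matrix.transpose_smul]
  congr 1
  rw [Matrix.transpose_mul, Matrix.transpose_mul, Matrix.transpose_nonsing_inv,
    Matrix.transpose_nonsing_inv, Matrix.transpose_add, Matrix.transpose_add, hX,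
    Matrix.transpose_one]
  have u1 : IsUnit (1 + O * U) := (Matrix.isUnit_iff_isUnit_det _).mpr h.isUnit
  have u2 : IsUnit (1 + (O * U)ᵀ) := (Matrix.isUnit_iff_isUnit_det _).mpr h2.isUnit
  have u3 : IsUnit (1 + X) := (Matrix.isUnit_iff_isUnit_det _).mpr hx.isUnit
  have u4 : IsUnit (1 + -X) := (Matrix.isUnit_iff_isUnit_det _).mpr hx'.isUnit
  have e1 : (1 + (O * U)ᵀ) = (O * U)ᵀ * (1 + O * U) := by
    rw [mul_add, hOO]; simp [add_comm]
  -- (1+(OU)ᵀ)⁻¹ * Uᵀ = (1+OU)⁻¹ * O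
  have e2 : (1 + (O * U)ᵀ)⁻¹ * Uᵀ = (1 + O * U)⁻¹ * O := by
    apply u2.mul_left_cancel
    rw [Matrix.mul_nonsing_inv_cancel_left _ _ h2.isUnit]
    rw [e1, Matrix.mul_assoc, Matrix.mul_nonsing_inv_cancel_left _ _ h.isUnit,
      Matrix.transpose_mul, Matrix.mul_assoc, hO, mul_one]
  rw [← Matrix.mul_assoc, e2, Matrix.mul_assoc]
  congr 1
  apply u4.mul_right_cancel
  rw [Matrix.nonsing_inv_mul_cancel_right _ _ hx'.isUnit]
  apply u3.mul_left_cancel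
  rw [hOdef, mul_cy hx, Matrix.mul_nonsing_inv_cancel_left _ _ hx.isUnit, sub_eq_add_neg]

section deriv
attribute [local instance] Matrix.linftyOpNormedRing Matrix.linftyOpNormedAlgebra

lemma hasFDerivAt_matinv (A : Matrix n n ℝ) (hA : A.det ≠ 0) :
    HasFDerivAt (fun B : Matrix n n ℝ => B⁻¹)
      (-ContinuousLinearMap.mulLeftRight ℝ (Matrix n n ℝ) A⁻¹ A⁻¹) A := by
  have u : IsUnit A := (Matrix.isUnit_iff_isUnit_det _).mpr hA.isUnit
  have := hasFDerivAt_ringInverse (𝕜 := ℝ) u.unit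
  have e : ((u.unit⁻¹ : (Matrix n n ℝ)ˣ) : Matrix n n ℝ) = A⁻¹ := by
    rw [Matrix.coe_units_inv]; rfl
  rw [e] at this
  have e2 : (fun B : Matrix n n ℝ => B⁻¹) = Ring.inverse := by
    funext B; exact Matrix.nonsing_inv_eq_ringInverse B
  rw [e2]
  exact this

lemma hasFDerivAt_cy (A : Matrix n n ℝ) (hA : (1 + A).det ≠ 0) :
    HasFDerivAt (cy : Matrix n n ℝ → Matrix n n ℝ)
      (-((2 : ℝ) • ContinuousLinearMap.mulLeftRight ℝ (Matrix n n ℝ) (1 + A)⁻¹ (1 + A)⁻¹)) A := by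
  have h1 : HasFDerivAt (fun B : Matrix n n ℝ => 1 + B) (ContinuousLinearMap.id ℝ _) A :=
    (hasFDerivAt_id A).const_add 1
  have h2 := ((hasFDerivAt_matinv (1 + A) hA).comp A h1).const_smul (2 : ℝ)
  have h3 := h2.sub_const 1
  refine h3.congr_fderiv ?_
  refine ContinuousLinearMap.ext fun B => ?_
  change (2 : ℝ) • (-((1 + A)⁻¹ * B * (1 + A)⁻¹)) = -((2 : ℝ) • ((1 + A)⁻¹ * B * (1 + A)⁻¹))
  rw [smul_neg]

lemma hasFDerivAt_step (U : Matrix n n ℝ) (hU : Uᵀ * U = 1) (v : SkE n)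
    (h : (1 + cy (sk v) * U).det ≠ 0) :
    HasFDerivAt (fun v => up (cy (cy (sk v) * U)))
      (LinearMap.toContinuousLinearMap
        (Lq ((2 : ℝ) • ((1 + sk v)⁻¹ * U * (1 + cy (sk v) * U)⁻¹)))) v := by
  have hX := sk_transpose v
  have hx := det_one_add_skew hX
  have d1 : HasFDerivAt (fun v : SkE n => sk v) (LinearMap.toContinuousLinearMap (sk (n := n))) v :=
    (LinearMap.toContinuousLinearMap (sk (n := n))).hasFDerivAt
  have d2 := (hasFDerivAt_cy (sk v) hx).comp v d1
  have d3 := d2.mul_const' U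
  have d4 := (hasFDerivAt_cy (cy (sk v) * U) h).comp v d3
  have d5 := (LinearMap.toContinuousLinearMap (up (n := n))).hasFDerivAt.comp v d4
  refine d5.congr_fderiv ?_
  refine ContinuousLinearMap.ext fun w => ?_
  have hq := cayley_Q hX hU h
  simp only [LinearMap.coe_toContinuousLinearMap', Lq_apply]
  rw [hq]
  change up (-((2 : ℝ) • ((1 + cy (sk v) * U)⁻¹ *
    (-((2 : ℝ) • ((1 + sk v)⁻¹ * sk w * (1 + sk v)⁻¹)) * U) * (1 + cy (sk v) * U)⁻¹))) = _
  congr 1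
  simp [Matrix.mul_assoc, smul_smul]
end deriv

lemma det_step (U : Matrix n n ℝ) (hU : Uᵀ * U = 1) (v : SkE n)
    (h : (1 + cy (sk v) * U).det ≠ 0) :
    |LinearMap.det (Lq ((2 : ℝ) • ((1 + sk v)⁻¹ * U * (1 + cy (sk v) * U)⁻¹)))| *
      (|(1 + cy (cy (sk v) * U)).det| ^ (Fintype.card n - 1))⁻¹
      = (|(1 + sk v).det| ^ (Fintype.card n - 1))⁻¹ := by
  have hx := det_one_add_skew (sk_transpose v)
  have hUd : |U.det| = 1 := by
    have := congrArg Matrix.det hU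
    rw [Matrix.det_mul, Matrix.det_transpose, Matrix.det_one] at this
    have h2 : |U.det| * |U.det| = 1 := by rw [← abs_mul, this, abs_one]
    nlinarith [abs_nonneg U.det]
  have hU0 : U.det ≠ 0 := by intro h0; rw [h0] at hUd; simp at hUd
  have hq : ((2 : ℝ) • ((1 + sk v)⁻¹ * U * (1 + cy (sk v) * U)⁻¹)).det
      = 2 ^ Fintype.card n * ((1 + sk v).det⁻¹ * U.det * (1 + cy (sk v) * U).det⁻¹) := by
    rw [Matrix.det_smul, Matrix.det_mul, Matrix.det_mul, Matrix.det_nonsing_inv,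
      Matrix.det_nonsing_inv, Ring.inverse_eq_inv']
  rw [det_Lq, hq, det_one_add_cy, abs_pow, ← inv_pow, ← inv_pow, ← mul_pow]
  · congr 1
    simp only [abs_mul, abs_inv, hUd]
    have := abs_pos.mpr hx
    have := abs_pos.mpr h
    field_simp
  · rw [hq]; positivity
end

instance matBorel (m n : Type*) [Fintype m] [Fintype n] : BorelSpace (Matrix m n ℝ) :=
  (inferInstance : BorelSpace (m → n → ℝ))

instance matSecond (m n : Type*) [Fintype m] [Fintype n] :
    SecondCountableTopology (Matrix m n ℝ) :=
  (inferInstance : SecondCountableTopology (m → n → ℝ))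

lemma measurable_matrix_iff {α m n : Type*} [MeasurableSpace α] {f : α → Matrix m n ℝ} :
    Measurable f ↔ ∀ i j, Measurable fun a => f a i j := by
  constructor
  · intro h i j
    exact (measurable_pi_apply j).comp ((measurable_pi_apply i).comp h)
  · intro h
    exact measurable_pi_lambda _ fun i => measurable_pi_lambda _ fun j => h i j

lemma measurable_matmul {α l m n : Type*} [MeasurableSpace α] [Fintype m]
    {f : α → Matrix l m ℝ} {g : α → Matrix m n ℝ}
    (hf : Measurable f) (hg : Measurable g) : Measurable fun a => f a * g a := by
  rw [measurable_matrix_iff] at *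
  intro i j
  simp only [Matrix.mul_apply]
  exact Finset.measurable_sum _ fun k _ => (hf i k).mul (hg k j)

section
variable {n : Type*} [Fintype n] [DecidableEq n]

lemma measurable_det : Measurable fun A : Matrix n n ℝ => A.det :=
  (continuous_id.matrix_det).measurable

lemma measurable_matinv : Measurable fun A : Matrix n n ℝ => A⁻¹ := by
  rw [measurable_matrix_iff]
  intro i j
  simp only [Matrix.inv_def, Ring.inverse_eq_inv', Matrix.smul_apply, smul_eq_mul]
  refine measurable_det.inv.mul ?_
  exact (continuous_id.matrix_adjugate.matrix_elem i j).measurable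

lemma measurable_one_add : Measurable fun A : Matrix n n ℝ => 1 + A :=
  (continuous_const.add continuous_id).measurable

lemma measurable_cy : Measurable (cy : Matrix n n ℝ → Matrix n n ℝ) := by
  have h := measurable_matinv.comp (measurable_one_add (n := n))
  rw [measurable_matrix_iff] at *
  intro i j
  simp only [cy, Matrix.sub_apply, Matrix.smul_apply, smul_eq_mul]
  exact ((h i j).const_mul 2).sub_const _

lemma continuous_sk : Continuous (fun v : SkE n => sk v) :=
  LinearMap.continuous_of_finiteDimensional sk

lemma measurable_sk : Measurable (fun v : SkE n => sk v) := continuous_sk.measurable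

lemma null_of_rays {ι : Type*} [Fintype ι] (f : (ι → ℝ) → ℝ) (hf : Continuous f)
    (h : ∀ v, ({t : ℝ | f (t • v) = 0}).Finite) : volume {v | f v = 0} = 0 := by
  set s : Set (ℝ × (ι → ℝ)) := {q | f (q.1 • q.2) = 0} with hs
  have hsm : MeasurableSet s :=
    (hf.comp (continuous_fst.smul continuous_snd)).measurable (measurableSet_singleton 0)
  have h0 : ((volume : Measure ℝ).prod (volume : Measure (ι → ℝ))) s = 0 := by
    rw [Measure.prod_apply_symm hsm]
    rw [lintegral_eq_zero_iff' (measurable_measure_prodMk_right hsm).aemeasurable]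
    filter_upwards with v
    exact (h v).measure_zero _
  rw [Measure.measure_prod_null hsm] at h0
  have h1 : ∀ᵐ t : ℝ, t ≠ 0 := by
    simp [ae_iff]
  obtain ⟨t, ht, ht0⟩ := (h0.and h1).exists
  have h2 : Prod.mk t ⁻¹' s = (fun v => t • v) ⁻¹' {v | f v = 0} := rfl
  simp only [Pi.zero_apply] at ht
  rw [h2, Measure.addHaar_preimage_smul _ ht0] at ht
  rcases mul_eq_zero.mp ht with h3 | h3
  · exfalso
    rw [ENNReal.ofReal_eq_zero] at h3
    have : 0 < |(t ^ Module.finrank ℝ (ι → ℝ))⁻¹| := by positivity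
    linarith
  · exact h3

lemma finite_det_zero (P S : Matrix n n ℝ) (hP : P.det ≠ 0) :
    {t : ℝ | (P + t • S).det = 0}.Finite := by
  set p : Polynomial ℝ :=
    (P.map Polynomial.C + (Polynomial.X : Polynomial ℝ) • S.map Polynomial.C).det with hp
  have he : ∀ t, p.eval t = (P + t • S).det := by
    intro t
    rw [hp, ← Polynomial.coe_evalRingHom, RingHom.map_det]
    congr 1
    ext i j
    simp
    ring
  have hp0 : p ≠ 0 := by
    intro h
    have := he 0
    rw [h] at this
    simp at this
    exact hP this.symm
  refine (Polynomial.finite_setOfPred_isRoot hp0).subset ?_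
  intro t ht
  simp only [Set.mem_ofPred_eq, Polynomial.IsRoot.def] at *
  rw [he, ht]

lemma null_bad (U : Matrix n n ℝ) (hU : (1 + U).det ≠ 0) :
    volume {v : SkE n | (1 + cy (sk v) * U).det = 0} = 0 := by
  have e : {v : SkE n | (1 + cy (sk v) * U).det = 0}
      = {v : SkE n | ((1 + U) + sk v * (1 - U)).det = 0} := by
    ext v
    simp only [Set.mem_ofPred_eq]
    have hx := det_one_add_skew (sk_transpose v)
    have h1 : (1 + U) + sk v * (1 - U) = (1 + sk v) * (1 + cy (sk v) * U) := by
      rw [mul_add, ← Matrix.mul_assoc, mul_cy hx]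
      noncomm_ring
    rw [h1, Matrix.det_mul]
    simp [hx]
  rw [e]
  apply null_of_rays
  · exact (continuous_const.add (continuous_sk.matrix_mul continuous_const)).matrix_det
  · intro v
    have := finite_det_zero (1 + U) (sk v * (1 - U)) hU
    simpa using this

/-- Density of the Haar measure in Cayley coordinates. -/
def rho (v : SkE n) : ENNReal :=
  ENNReal.ofReal ((|(1 + sk v).det| ^ (Fintype.card n - 1))⁻¹)

/-- Unnormalized Haar measure on `SO(n)` through the Cayley transform. -/
def muc (n : Type*) [Fintype n] [DecidableEq n] : Measure (Matrix n n ℝ) :=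
  ((volume : Measure (SkE n)).withDensity rho).map (fun v => cy (sk v))

lemma measurable_rho : Measurable (rho : SkE n → ENNReal) := by
  have h : Measurable fun v : SkE n => (1 + sk v).det :=
    measurable_det.comp (measurable_one_add.comp measurable_sk)
  have h2 : Measurable fun v : SkE n => |(1 + sk v).det| := continuous_abs.measurable.comp h
  exact ((h2.pow_const _).inv).ennreal_ofReal

lemma lintegral_muc (f : Matrix n n ℝ → ENNReal) (hf : Measurable f) :
    ∫⁻ O, f O ∂(muc n) = ∫⁻ v : SkE n, rho v * f (cy (sk v)) := by
  have hm : Measurable fun v : SkE n => cy (sk v) := measurable_cy.comp measurable_sk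
  have hfm : Measurable fun v : SkE n => f (cy (sk v)) := hf.comp hm
  rw [muc, lintegral_map hf hm,
    lintegral_withDensity_eq_lintegral_mul _ measurable_rho hfm]
  rfl

lemma step_inv (U : Matrix n n ℝ) (hU : Uᵀ * U = 1) (v : SkE n)
    (h : (1 + cy (sk v) * U).det ≠ 0) :
    sk (up (cy (cy (sk v) * U))) = cy (cy (sk v) * U) ∧
    cy (sk (up (cy (cy (sk v) * U)))) = cy (sk v) * U ∧
    (1 + cy (sk (up (cy (cy (sk v) * U)))) * Uᵀ).det ≠ 0 ∧
    up (cy (cy (sk (up (cy (cy (sk v) * U)))) * Uᵀ)) = v := by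
  have hX := sk_transpose v
  have hx := det_one_add_skew hX
  have hU' : U * Uᵀ = 1 := mul_eq_one_comm.mp hU
  have hO := cy_orth hX
  have hOO : (cy (sk v) * U)ᵀ * (cy (sk v) * U) = 1 := by
    rw [Matrix.transpose_mul, Matrix.mul_assoc, ← Matrix.mul_assoc (cy (sk v))ᵀ, hO, one_mul, hU]
  have h1 : sk (up (cy (cy (sk v) * U))) = cy (cy (sk v) * U) := sk_up (cy_skew hOO h)
  have h2 : cy (sk (up (cy (cy (sk v) * U)))) = cy (sk v) * U := by rw [h1, cy_cy h]
  have h3 : cy (sk v) * U * Uᵀ = cy (sk v) := by rw [Matrix.mul_assoc, hU', mul_one]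
  refine ⟨h1, h2, ?_, ?_⟩
  · rw [h2, h3]; exact det_one_add_cy_ne hx
  · rw [h2, h3, cy_cy hx, up_sk]

lemma muc_right_inv_aux (U : Matrix n n ℝ) (hU : Uᵀ * U = 1) (hd : (1 + U).det ≠ 0)
    (f : Matrix n n ℝ → ENNReal) (hf : Measurable f) :
    ∫⁻ O, f (O * U) ∂(muc n) = ∫⁻ O, f O ∂(muc n) := by
  have hU' : U * Uᵀ = 1 := mul_eq_one_comm.mp hU
  have hdT : (1 + Uᵀ).det ≠ 0 := by
    rw [← Matrix.det_transpose]; simpa using hd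
  have hmU : Measurable fun O : Matrix n n ℝ => O * U :=
    measurable_matmul measurable_id measurable_const
  have hfU : Measurable fun O : Matrix n n ℝ => f (O * U) := hf.comp hmU
  rw [lintegral_muc _ hf, lintegral_muc _ hfU]
  set s : Set (SkE n) := {v | (1 + cy (sk v) * U).det ≠ 0} with hs
  set s' : Set (SkE n) := {v | (1 + cy (sk v) * Uᵀ).det ≠ 0} with hs'
  have meas : ∀ V : Matrix n n ℝ, MeasurableSet {v : SkE n | (1 + cy (sk v) * V).det ≠ 0} := by
    intro V
    have : Measurable fun v : SkE n => (1 + cy (sk v) * V).det :=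
      measurable_det.comp (measurable_one_add.comp
        (measurable_matmul (measurable_cy.comp measurable_sk) measurable_const))
    exact this (measurableSet_singleton 0).compl
  have hsm : MeasurableSet s := meas U
  have hae : ∀ V : Matrix n n ℝ, (1 + V).det ≠ 0 →
      (volume : Measure (SkE n)).restrict {v : SkE n | (1 + cy (sk v) * V).det ≠ 0} = volume := by
    intro V hV
    apply Measure.restrict_eq_self_of_ae_mem
    rw [ae_iff]
    simpa using null_bad V hV
  set h : SkE n → SkE n := fun v => up (cy (cy (sk v) * U)) with hh
  have himg : h '' s = s' := by
    ext w
    constructor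
    · rintro ⟨v, hv, rfl⟩
      exact (step_inv U hU v hv).2.2.1
    · intro hw
      have := step_inv Uᵀ (by simpa using hU') w hw
      simp only [Matrix.transpose_transpose] at this
      exact ⟨_, this.2.2.1, this.2.2.2⟩
  have hinj : Set.InjOn h s := by
    intro v hv w hw hvw
    have h1 := (step_inv U hU v hv).2.2.2
    have h2 := (step_inv U hU w hw).2.2.2
    have h3 : up (cy (cy (sk v) * U)) = up (cy (cy (sk w) * U)) := hvw
    rw [← h1, ← h2, h3]
  have key := lintegral_image_eq_lintegral_abs_det_fderiv_mul volume hsm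
    (fun v hv => (hasFDerivAt_step U hU v hv).hasFDerivWithinAt) hinj
    (fun v => rho v * f (cy (sk v)))
  rw [himg] at key
  rw [← hae Uᵀ hdT]
  refine Eq.trans ?_ key.symm
  rw [hae Uᵀ hdT]
  conv_lhs => rw [← hae U hd]
  refine setLIntegral_congr_fun hsm fun v hv => ?_
  have h1 := step_inv U hU v hv
  simp only [rho]
  rw [h1.2.1, h1.1, ← mul_assoc, ← ENNReal.ofReal_mul (abs_nonneg _)]
  rw [show ∀ L : SkE n →ₗ[ℝ] SkE n, (LinearMap.toContinuousLinearMap L).det = LinearMap.det L from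
    fun L => rfl, det_step U hU v hv]
end

/-- Matrix of the reflection in the hyperplane orthogonal to `u`. -/
def rfm {n : Type*} [Fintype n] [DecidableEq n] (u : n → ℝ) : Matrix n n ℝ :=
  1 - (2 / (u ⬝ᵥ u)) • Matrix.vecMulVec u u

section
variable {n : Type*} [Fintype n] [DecidableEq n]

lemma rfm_mulVec (u x : n → ℝ) : rfm u *ᵥ x = x - (2 / (u ⬝ᵥ u) * (u ⬝ᵥ x)) • u := by
  rw [rfm, Matrix.sub_mulVec, Matrix.one_mulVec, Matrix.smul_mulVec, Matrix.vecMulVec_mulVec]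
  ext i
  simp
  ring

lemma rfm_zero : rfm (0 : n → ℝ) = 1 := by
  simp [rfm]

lemma rfm_transpose (u : n → ℝ) : (rfm u)ᵀ = rfm u := by
  simp [rfm, Matrix.transpose_vecMulVec]

lemma dot_self_ne {u : n → ℝ} (hu : u ≠ 0) : u ⬝ᵥ u ≠ 0 :=
  fun h => hu (dotProduct_self_eq_zero.mp h)

lemma rfm_sq (u : n → ℝ) : rfm u * rfm u = 1 := by
  by_cases hu : u = 0
  · subst hu; simp [rfm_zero]
  have h := dot_self_ne hu
  apply Matrix.ext_of_mulVec_single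
  intro i
  rw [← Matrix.mulVec_mulVec, Matrix.one_mulVec, rfm_mulVec, rfm_mulVec, dotProduct_sub,
    dotProduct_smul, smul_eq_mul]
  ext j
  simp only [Pi.sub_apply, Pi.smul_apply, smul_eq_mul]
  field_simp
  ring

lemma rfm_det {u : n → ℝ} (hu : u ≠ 0) : (rfm u).det = -1 := by
  have h := dot_self_ne hu
  have e : rfm u = 1 + Matrix.vecMulVec (-(2 / (u ⬝ᵥ u)) • u) u := by
    rw [rfm, Matrix.smul_vecMulVec, neg_smul, sub_eq_add_neg]
  rw [e, Matrix.vecMulVec_eq Unit, Matrix.det_one_add_replicateCol_mul_replicateRow, dotProduct_smul, smul_eq_mul]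
  field_simp
  ring

lemma rfm_pair_det {u v : n → ℝ} (hu : u ≠ 0) (hv : v ≠ 0) (huv : u ⬝ᵥ v ≠ 0) :
    (1 + rfm u * rfm v).det ≠ 0 := by
  intro h
  obtain ⟨x, hx, h0⟩ := Matrix.exists_mulVec_eq_zero_iff.mpr h
  apply hx
  have h1 : rfm u *ᵥ x + rfm v *ᵥ x = 0 := by
    have := congrArg (fun y => rfm u *ᵥ y) h0
    simp only [Matrix.mulVec_mulVec, Matrix.mulVec_zero] at this
    rw [mul_add, mul_one, ← Matrix.mul_assoc, rfm_sq, one_mul, Matrix.add_mulVec] at this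
    exact this
  rw [rfm_mulVec, rfm_mulVec] at h1
  have hu' := dot_self_ne hu
  have hv' := dot_self_ne hv
  have a1 := congrArg (fun y => u ⬝ᵥ y) h1
  have a2 := congrArg (fun y => v ⬝ᵥ y) h1
  simp only [dotProduct_add, dotProduct_sub, dotProduct_smul, smul_eq_mul, dotProduct_zero] at a1 a2
  have b1 : v ⬝ᵥ x = 0 := by
    have : 2 / (v ⬝ᵥ v) * (v ⬝ᵥ x) * (u ⬝ᵥ v) = 0 := by
      have : 2 / (u ⬝ᵥ u) * (u ⬝ᵥ x) * (u ⬝ᵥ u) = 2 * (u ⬝ᵥ x) := by field_simp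
      linarith
    have h2 : (2 / (v ⬝ᵥ v)) ≠ 0 := by positivity
    simpa [huv, h2, hv'] using this
  have b2 : u ⬝ᵥ x = 0 := by
    have : 2 / (u ⬝ᵥ u) * (u ⬝ᵥ x) * (v ⬝ᵥ u) = 0 := by
      have : 2 / (v ⬝ᵥ v) * (v ⬝ᵥ x) * (v ⬝ᵥ v) = 2 * (v ⬝ᵥ x) := by field_simp
      linarith
    rw [dotProduct_comm v u] at this
    simpa [huv, hu'] using this
  rw [b1, b2] at h1
  simp at h1
  ext i
  have := congrFun h1 i
  simp at this
  simpa using this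

lemma orth_list (U : Matrix n n ℝ) (hU : Uᵀ * U = 1) :
    ∃ l : List (n → ℝ), U = (l.map rfm).prod := by
  set A : EuclideanSpace ℝ n →ₗ[ℝ] EuclideanSpace ℝ n := Matrix.toEuclideanLin U with hA
  have hAx : ∀ x, (A x).ofLp = U *ᵥ x.ofLp := fun x => rfl
  have hnorm : ∀ x, ‖A x‖ = ‖x‖ := by
    intro x
    rw [EuclideanSpace.norm_eq, EuclideanSpace.norm_eq]
    congr 1
    have h1 : (U *ᵥ x.ofLp) ⬝ᵥ (U *ᵥ x.ofLp) = x.ofLp ⬝ᵥ x.ofLp := by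
      rw [Matrix.dotProduct_mulVec, ← Matrix.mulVec_transpose, Matrix.mulVec_mulVec, hU,
        Matrix.one_mulVec]
    simp only [Real.norm_eq_abs, sq_abs]
    simp only [hAx]
    simpa [dotProduct, sq] using h1
  let φ : EuclideanSpace ℝ n ≃ₗᵢ[ℝ] EuclideanSpace ℝ n :=
    LinearIsometry.toLinearIsometryEquiv ⟨A, hnorm⟩ rfl
  obtain ⟨l, -, hl⟩ := φ.reflections_generate_dim
  refine ⟨l.map (fun v => v.ofLp), ?_⟩
  have key : ∀ l : List (EuclideanSpace ℝ n), ∀ x : EuclideanSpace ℝ n,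
      (((l.map (fun v => v.ofLp)).map rfm).prod) *ᵥ x.ofLp
        = ((l.map fun v => (Submodule.span ℝ {v})ᗮ.reflection).prod x).ofLp := by
    intro l
    induction l with
    | nil => intro x; simp
    | cons a l ih =>
      intro x
      rw [List.map_cons, List.map_cons, List.prod_cons, List.map_cons, List.prod_cons,
        ← Matrix.mulVec_mulVec, ih x, rfm_mulVec]
      rw [LinearIsometryEquiv.coe_mul, Function.comp_apply, Submodule.reflection_orthogonal_apply,
        Submodule.reflection_singleton_apply]
      set y := (l.map fun v => (Submodule.span ℝ {v})ᗮ.reflection).prod x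
      have e1 : inner ℝ a y = a.ofLp ⬝ᵥ y.ofLp := by
        rw [EuclideanSpace.inner_eq_star_dotProduct]; simp [dotProduct_comm]
      have e2 : ((‖a‖ : ℝ)) ^ 2 = a.ofLp ⬝ᵥ a.ofLp := by
        rw [← real_inner_self_eq_norm_sq, EuclideanSpace.inner_eq_star_dotProduct]; simp
      simp only [RCLike.ofReal_real_eq_id, id_eq]
      rw [e1, e2]
      ext i
      simp
      ring
  apply Matrix.ext_of_mulVec_single
  intro i
  rw [show (Pi.single i (1 : ℝ) : n → ℝ) = (WithLp.toLp 2 (Pi.single i (1 : ℝ)) : EuclideanSpace ℝ n).ofLp from rfl,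
    key, ← hl]
  rfl

/-- right invariance under a fixed matrix -/
def Good (U : Matrix n n ℝ) : Prop :=
  ∀ f : Matrix n n ℝ → ENNReal, Measurable f →
    ∫⁻ O, f (O * U) ∂(muc n) = ∫⁻ O, f O ∂(muc n)

lemma Good.mul {U V : Matrix n n ℝ} (hU : Good U) (hV : Good V) : Good (U * V) := by
  intro f hf
  have hm : Measurable fun O : Matrix n n ℝ => f (O * V) :=
    hf.comp (measurable_matmul measurable_id measurable_const)
  have := hU _ hm
  simp only [Matrix.mul_assoc] at this
  rw [this, hV f hf]

lemma good_pair {u v : n → ℝ} (hu : u ≠ 0) (hv : v ≠ 0) : Good (rfm u * rfm v) := by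
  have main : ∀ {u v : n → ℝ}, u ≠ 0 → v ≠ 0 → u ⬝ᵥ v ≠ 0 → Good (rfm u * rfm v) := by
    intro u v hu hv huv
    apply muc_right_inv_aux
    · rw [Matrix.transpose_mul, rfm_transpose, rfm_transpose, Matrix.mul_assoc,
        ← Matrix.mul_assoc (rfm u), rfm_sq, one_mul, rfm_sq]
    · exact rfm_pair_det hu hv huv
  by_cases huv : u ⬝ᵥ v = 0
  · have h1 : u ⬝ᵥ (u + v) ≠ 0 := by rw [dotProduct_add, huv, add_zero]; exact dot_self_ne hu
    have h2 : (u + v) ⬝ᵥ v ≠ 0 := by rw [add_dotProduct, huv, zero_add]; exact dot_self_ne hv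
    have hw : u + v ≠ 0 := by rintro h; rw [h] at h1; simp at h1
    have := (main hu hw h1).mul (main hw hv h2)
    rwa [Matrix.mul_assoc, ← Matrix.mul_assoc (rfm (u + v)), rfm_sq, one_mul] at this
  · exact main hu hv huv

lemma good_one : Good (1 : Matrix n n ℝ) := by
  intro f _; simp

lemma good_SO (U : Matrix n n ℝ) (hU : Uᵀ * U = 1) (hd : U.det = 1) : Good U := by
  obtain ⟨l, rfl⟩ := orth_list U hU
  clear hU
  have key : ∀ l : List (n → ℝ),
      ((l.map rfm).prod.det = 1 ∧ Good (l.map rfm).prod) ∨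
      ((l.map rfm).prod.det = -1 ∧ ∀ v : n → ℝ, v ≠ 0 → Good (rfm v * (l.map rfm).prod)) := by
    intro l
    induction l with
    | nil => left; simp [good_one]
    | cons a l ih =>
      rw [List.map_cons, List.prod_cons]
      by_cases ha : a = 0
      · subst ha
        rw [rfm_zero, one_mul]; exact ih
      · rcases ih with ⟨h1, h2⟩ | ⟨h1, h2⟩
        · right
          refine ⟨by rw [Matrix.det_mul, rfm_det ha, h1]; norm_num, fun v hv => ?_⟩
          rw [← Matrix.mul_assoc]
          exact (good_pair hv ha).mul h2
        · left
          exact ⟨by rw [Matrix.det_mul, rfm_det ha, h1]; norm_num, h2 a ha⟩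
  rcases key l with h | h
  · exact h.2
  · rw [h.1] at hd; norm_num at hd

lemma muc_ae_SO : ∀ᵐ O ∂(muc n), Oᵀ * O = 1 ∧ O.det = 1 := by
  have hm : Measurable fun v : SkE n => cy (sk v) := measurable_cy.comp measurable_sk
  have hms : MeasurableSet {O : Matrix n n ℝ | Oᵀ * O = 1 ∧ O.det = 1} := by
    refine MeasurableSet.inter ?_ ?_
    · exact (isClosed_eq ((continuous_id.matrix_transpose).matrix_mul continuous_id)
        continuous_const).measurableSet
    · exact measurable_det (measurableSet_singleton 1)
  rw [muc, ae_map_iff hm.aemeasurable hms]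
  filter_upwards with v
  exact ⟨cy_orth (sk_transpose v), cy_det (sk_transpose v)⟩

instance muc_sfinite : SFinite (muc n) := by
  unfold muc; infer_instance

lemma muc_eq (ν : Measure (Matrix n n ℝ)) (hν : IsHaarSO n ν) :
    muc n = (muc n) Set.univ • ν := by
  obtain ⟨hp, hae, hinv⟩ := hν
  refine Measure.ext_of_lintegral _ fun f hf => ?_
  have hmul : Measurable fun q : Matrix n n ℝ × Matrix n n ℝ => f (q.1 * q.2) :=
    hf.comp (measurable_matmul measurable_fst measurable_snd)
  have h1 : ∫⁻ x, ∫⁻ y, f (x * y) ∂ν ∂(muc n) = (muc n) Set.univ * ∫⁻ y, f y ∂ν := by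
    have : ∀ᵐ x ∂(muc n), ∫⁻ y, f (x * y) ∂ν = ∫⁻ y, f y ∂ν := by
      filter_upwards [muc_ae_SO (n := n)] with x hx
      conv_rhs => rw [← hinv x hx.1 hx.2]
      have hmx : Measurable fun O : Matrix n n ℝ => x * O :=
        measurable_matmul measurable_const measurable_id
      rw [lintegral_map hf hmx]
    rw [lintegral_congr_ae this, lintegral_const, mul_comm]
  have h2 : ∫⁻ y, ∫⁻ x, f (x * y) ∂(muc n) ∂ν = ∫⁻ x, f x ∂(muc n) := by
    have : ∀ᵐ y ∂ν, ∫⁻ x, f (x * y) ∂(muc n) = ∫⁻ x, f x ∂(muc n) := by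
      filter_upwards [hae] with y hy
      exact good_SO y hy.1 hy.2 f hf
    rw [lintegral_congr_ae this, lintegral_const, measure_univ, mul_one]
  rw [lintegral_smul_measure, smul_eq_mul, ← h1, ← h2]
  exact (lintegral_lintegral_swap hmul.aemeasurable).symm

lemma muc_univ_ne_zero : (muc n) Set.univ ≠ 0 := by
  intro h
  rw [Measure.measure_univ_eq_zero] at h
  have h2 : ∫⁻ O, 1 ∂(muc n) = 0 := by rw [h]; simp
  rw [lintegral_muc _ measurable_const] at h2
  simp only [mul_one] at h2
  rw [lintegral_eq_zero_iff measurable_rho] at h2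
  obtain ⟨v, hv⟩ := h2.exists
  simp only [rho, Pi.zero_apply, ENNReal.ofReal_eq_zero] at hv
  have := abs_pos.mpr (det_one_add_skew (sk_transpose v))
  have : 0 < (|(1 + sk v).det| ^ (Fintype.card n - 1))⁻¹ := by positivity
  linarith

lemma muc_univ_ne_top (ν : Measure (Matrix n n ℝ)) (hν : IsHaarSO n ν) :
    (muc n) Set.univ ≠ ⊤ := by
  intro htop
  have he := muc_eq ν hν
  have hu : Measurable fun O : Matrix n n ℝ => up (cy O) :=
    (LinearMap.continuous_of_finiteDimensional up).measurable.comp measurable_cy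
  set g : SkE n → ENNReal := (Metric.ball (0 : SkE n) 1).indicator (fun v => (rho v)⁻¹) with hg
  have hgm : Measurable g := measurable_rho.inv.indicator measurableSet_ball
  have hf : Measurable fun O : Matrix n n ℝ => g (up (cy O)) := hgm.comp hu
  have h1 : ∫⁻ O, g (up (cy O)) ∂(muc n) = volume (Metric.ball (0 : SkE n) 1) := by
    rw [lintegral_muc _ hf, ← lintegral_indicator_one measurableSet_ball]
    refine lintegral_congr fun v => ?_
    have hx := det_one_add_skew (sk_transpose v)
    rw [cy_cy hx, up_sk, hg]
    by_cases hv : v ∈ Metric.ball (0 : SkE n) 1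
    · rw [Set.indicator_of_mem hv, Set.indicator_of_mem hv]
      have := abs_pos.mpr hx
      have : 0 < (|(1 + sk v).det| ^ (Fintype.card n - 1))⁻¹ := by positivity
      refine ENNReal.mul_inv_cancel ?_ ENNReal.ofReal_ne_top
      exact (ENNReal.ofReal_pos.mpr this).ne'
    · rw [Set.indicator_of_notMem hv, Set.indicator_of_notMem hv, mul_zero]
  rw [he, htop, lintegral_smul_measure, smul_eq_mul, ENNReal.top_mul'] at h1
  have hpos : 0 < volume (Metric.ball (0 : SkE n) 1) := Metric.measure_ball_pos _ _ one_pos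
  have hfin : volume (Metric.ball (0 : SkE n) 1) < ⊤ := measure_ball_lt_top
  split_ifs at h1
  · exact hpos.ne h1
  · exact hfin.ne h1.symm
end

section
variable {m n : Type*} [Fintype m] [Fintype n] [DecidableEq m] [DecidableEq n]

lemma lintegral_linear_sub {E : Type*} [NormedAddCommGroup E] [NormedSpace ℝ E]
    [FiniteDimensional ℝ E] [MeasurableSpace E] [BorelSpace E] (μ : Measure E)
    [μ.IsAddHaarMeasure] (L : E →ₗ[ℝ] E) (hL : LinearMap.det L ≠ 0) (G : E → ENNReal) :
    ∫⁻ y, G y ∂μ = ENNReal.ofReal |LinearMap.det L| * ∫⁻ w, G (L w) ∂μ := by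
  have hb : Function.Bijective L := by
    have := (LinearMap.equivOfDetNeZero L hL).bijective
    exact this
  have key := lintegral_image_eq_lintegral_abs_det_fderiv_mul μ MeasurableSet.univ
    (f := L) (f' := fun _ => LinearMap.toContinuousLinearMap L)
    (fun v _ => (LinearMap.toContinuousLinearMap L).hasFDerivAt.hasFDerivWithinAt)
    hb.1.injOn G
  rw [Set.image_univ, hb.2.range_eq, Measure.restrict_univ] at key
  rw [key, ← lintegral_const_mul' _ _ ENNReal.ofReal_ne_top]
  rfl

/-- left multiplication on rectangular matrices -/
def lmul (A : Matrix m m ℝ) : (m → n → ℝ) →ₗ[ℝ] (m → n → ℝ) where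
  toFun W := A * (Matrix.of W)
  map_add' V W := by
    exact Matrix.mul_add A (Matrix.of V) (Matrix.of W)
  map_smul' c W := by
    change A * (c • Matrix.of W) = _
    rw [Matrix.mul_smul]; rfl

lemma det_lmul (A : Matrix m m ℝ) :
    LinearMap.det (lmul (n := n) A) = A.det ^ Fintype.card n := by
  let e : (n → m → ℝ) ≃ₗ[ℝ] (m → n → ℝ) := Matrix.transposeLinearEquiv n m ℝ ℝ
  let f : (n → m → ℝ) →ₗ[ℝ] (n → m → ℝ) :=
    LinearMap.pi fun j => (Matrix.toLin' A).comp (LinearMap.proj j)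
  have h : lmul (n := n) A = e ∘ₗ f ∘ₗ e.symm := by
    apply LinearMap.ext
    intro W
    rfl
  have h2 : LinearMap.det f = A.det ^ Fintype.card n := by
    rw [LinearMap.det_pi]
    simp
  rw [h, ← h2]
  exact LinearMap.det_conj f e

/-- block skew matrix -/
def bs (x : Matrix m m ℝ) (y : Matrix m n ℝ) (z : Matrix n n ℝ) : Matrix (m ⊕ n) (m ⊕ n) ℝ :=
  Matrix.fromBlocks x y (-yᵀ) z

lemma bs_skew (x : SkE m) (y : Matrix m n ℝ) (z : SkE n) :
    (bs (sk x) y (sk z))ᵀ = - bs (sk x) y (sk z) := by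
  ext (i | i) (j | j)
  · exact congrFun (congrFun (sk_transpose x) i) j
  · simp [bs]
  · simp [bs]
  · exact congrFun (congrFun (sk_transpose z) i) j

/-- block coordinates on skew matrices -/
def blk : (SkE m × ((m → n → ℝ) × SkE n)) ≃ₗ[ℝ] SkE (m ⊕ n) where
  toFun p := up (bs (sk p.1) (Matrix.of p.2.1) (sk p.2.2))
  invFun v := (up (sk v).toBlocks₁₁, ((sk v).toBlocks₁₂, up (sk v).toBlocks₂₂))
  map_add' p q := by
    rw [← map_add]
    congr 1
    ext (i | i) (j | j) <;> simp [bs] <;> ring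
  map_smul' c p := by
    rw [← map_smul]
    congr 1
    ext (i | i) (j | j) <;> simp [bs]
  left_inv p := by
    have : sk (up (bs (sk p.1) (Matrix.of p.2.1) (sk p.2.2)))
        = bs (sk p.1) (Matrix.of p.2.1) (sk p.2.2) := sk_up (bs_skew _ _ _)
    simp only [this]
    simp [bs, up_sk]
    rfl
  right_inv v := by
    have h := sk_transpose v
    have e : bs (sk (up (sk v).toBlocks₁₁)) (Matrix.of (sk v).toBlocks₁₂)
        (sk (up (sk v).toBlocks₂₂)) = sk v := by
      have hij : ∀ i j, sk v j i = - sk v i j := fun i j => congrFun (congrFun h i) j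
      rw [sk_up, sk_up]
      · ext (i | i) (j | j)
        · simp [bs, Matrix.toBlocks₁₁]
        · rfl
        · exact (hij (Sum.inl j) (Sum.inr i)).symm
        · simp [bs, Matrix.toBlocks₂₂]
      · ext i j; exact hij _ _
      · ext i j; exact hij _ _
    simp only [e, up_sk]

lemma sk_blk (p : SkE m × ((m → n → ℝ) × SkE n)) :
    sk (blk p) = bs (sk p.1) (Matrix.of p.2.1) (sk p.2.2) := sk_up (bs_skew _ _ _)

lemma vol_haar (m n : Type*) [Fintype m] [Fintype n] :
    (volume : Measure (m → n → ℝ)).IsAddHaarMeasure := by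
  have h : (volume : Measure (n → ℝ)).IsAddHaarMeasure := inferInstance
  have h' : MeasurableAdd (n → ℝ) := inferInstance
  exact Measure.pi.isAddHaarMeasure (ι := m) (fun _ => (volume : Measure (n → ℝ)))

lemma vol_haar2 (m n k : Type*) [Fintype m] [Fintype n] [Fintype k] :
    ((volume : Measure (m → n → ℝ)).prod (volume : Measure (k → ℝ))).IsAddHaarMeasure := by
  have h0 := vol_haar m n
  have h : (volume : Measure (k → ℝ)).IsAddHaarMeasure := inferInstance
  have h1 : MeasurableAdd (n → ℝ) := inferInstance
  have h2 : MeasurableAdd (m → n → ℝ) := inferInstance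
  exact Measure.prod.instIsAddHaarMeasure volume volume

lemma vol_haar3 (m n k l : Type*) [Fintype m] [Fintype n] [Fintype k] [Fintype l] :
    ((volume : Measure (l → ℝ)).prod
      ((volume : Measure (m → n → ℝ)).prod (volume : Measure (k → ℝ)))).IsAddHaarMeasure := by
  have h0 := vol_haar2 m n k
  have h : (volume : Measure (l → ℝ)).IsAddHaarMeasure := inferInstance
  exact Measure.prod.instIsAddHaarMeasure volume _

lemma exists_blk_const : ∃ c : ENNReal, ∀ F : SkE (m ⊕ n) → ENNReal, Measurable F →
    ∫⁻ v, F v = c * ∫⁻ x : SkE m, ∫⁻ y : m → n → ℝ, ∫⁻ z : SkE n, F (blk (x, (y, z))) := by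
  let e : (SkE m × ((m → n → ℝ) × SkE n)) ≃L[ℝ] SkE (m ⊕ n) := blk.toContinuousLinearEquiv
  have h3 := vol_haar3 m n (SkIdx n) (SkIdx m)
  obtain ⟨c, h⟩ : ∃ c : NNReal, (volume : Measure (SkE (m ⊕ n))) =
      c • (Measure.map e ((volume : Measure (SkE m)).prod ((volume : Measure (m → n → ℝ)).prod
        (volume : Measure (SkE n))))) := by
    haveI hH := ContinuousLinearEquiv.isAddHaarMeasure_map e
      ((volume : Measure (SkE m)).prod ((volume : Measure (m → n → ℝ)).prod
        (volume : Measure (SkE n))))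
    exact ⟨_, Measure.isAddLeftInvariant_eq_smul (volume : Measure (SkE (m ⊕ n))) _⟩
  refine ⟨(c : ENNReal), fun F hF => ?_⟩
  have hFe : Measurable fun p => F (e p) := hF.comp e.continuous.measurable
  conv_lhs => rw [h]
  rw [lintegral_smul_measure, lintegral_map hF e.continuous.measurable,
    lintegral_prod _ hFe.aemeasurable]
  rw [ENNReal.smul_def, smul_eq_mul]
  congr 1
  refine lintegral_congr fun x => ?_
  rw [lintegral_prod]
  · rfl
  · exact (hFe.comp measurable_prodMk_left).aemeasurable

lemma bs_det (x : SkE m) (W : Matrix m n ℝ) (z : SkE n) :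
    (1 + bs (sk x) (-(1 + sk x) * W) (sk z)).det =
      (1 + sk x).det * ((1 + Wᵀ * W) + sk (z - up (Wᵀ * sk x * W))).det := by
  have hx := det_one_add_skew (sk_transpose x)
  have hs : sk (up (Wᵀ * sk x * W)) = Wᵀ * sk x * W := by
    apply sk_up
    simp [Matrix.transpose_mul, sk_transpose, Matrix.mul_assoc]
  have e : 1 + bs (sk x) (-(1 + sk x) * W) (sk z) =
      Matrix.fromBlocks (1 + sk x) (-(1 + sk x) * W) (-(-(1 + sk x) * W)ᵀ) (1 + sk z) := by
    rw [bs, ← Matrix.fromBlocks_one, Matrix.fromBlocks_add, zero_add, zero_add]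
  letI : Invertible (1 + sk x) := Matrix.invertibleOfIsUnitDet _ hx.isUnit
  rw [e, Matrix.det_fromBlocks₁₁, Matrix.invOf_eq_nonsing_inv]
  congr 2
  rw [map_sub, hs, Matrix.mul_assoc, Matrix.neg_mul (1 + sk x), Matrix.mul_neg (1 + sk x)⁻¹, Matrix.nonsing_inv_mul_cancel_left _ _ hx.isUnit]
  simp only [Matrix.transpose_neg, Matrix.transpose_mul, Matrix.transpose_add, Matrix.transpose_one,
    sk_transpose, neg_neg]
  simp only [Matrix.mul_add, Matrix.add_mul, Matrix.mul_neg, Matrix.neg_mul, Matrix.mul_one]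
  abel

lemma bs_psi (x : SkE m) (W : Matrix m n ℝ) (z : SkE n) :
    (cy (bs (sk x) (-(1 + sk x) * W) (sk z))).toBlocks₁₂ *
      (1 + (cy (bs (sk x) (-(1 + sk x) * W) (sk z))).toBlocks₂₂)⁻¹ = W := by
  have hx := det_one_add_skew (sk_transpose x)
  set X := bs (sk x) (-(1 + sk x) * W) (sk z) with hX
  have hd : (1 + X).det ≠ 0 := det_one_add_skew (bs_skew _ _ _)
  have e : 1 + X =
      Matrix.fromBlocks (1 + sk x) (-(1 + sk x) * W) (-(-(1 + sk x) * W)ᵀ) (1 + sk z) := by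
    rw [hX, bs, ← Matrix.fromBlocks_one, Matrix.fromBlocks_add, zero_add, zero_add]
  have e2 : 1 + cy X = Matrix.fromBlocks (1 + (cy X).toBlocks₁₁) (cy X).toBlocks₁₂
      (cy X).toBlocks₂₁ (1 + (cy X).toBlocks₂₂) := by
    conv_lhs => rw [← Matrix.fromBlocks_toBlocks (cy X), ← Matrix.fromBlocks_one,
      Matrix.fromBlocks_add, zero_add, zero_add]
  have e3 : (1 + X) * (1 + cy X) = (2 : ℝ) • (1 : Matrix (m ⊕ n) (m ⊕ n) ℝ) := by
    rw [one_add_cy, Matrix.mul_smul, Matrix.mul_nonsing_inv _ hd.isUnit]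
  rw [e, e2, Matrix.fromBlocks_multiply, ← Matrix.fromBlocks_one, Matrix.fromBlocks_smul,
    Matrix.fromBlocks_inj] at e3
  obtain ⟨-, h12, -, h22⟩ := e3
  set B := (cy X).toBlocks₁₂
  set D := 1 + (cy X).toBlocks₂₂
  have ux : IsUnit (1 + sk x) := (Matrix.isUnit_iff_isUnit_det _).mpr hx.isUnit
  have hB : B = W * D := by
    have h1 : (1 + sk x) * (B - W * D) = 0 := by
      rw [Matrix.mul_sub, ← Matrix.mul_assoc, sub_eq_add_neg, ← Matrix.neg_mul, ← Matrix.neg_mul, h12,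
        smul_zero]
    have h2 := congrArg (fun Y => (1 + sk x)⁻¹ * Y) h1
    simp only [Matrix.nonsing_inv_mul_cancel_left _ _ hx.isUnit, Matrix.mul_zero] at h2
    exact sub_eq_zero.mp h2
  have hD : IsUnit D.det := by
    rw [hB, ← Matrix.mul_assoc, ← Matrix.add_mul] at h22
    have h3 := congrArg Matrix.det h22
    rw [Matrix.det_mul, Matrix.det_smul, Matrix.det_one, mul_one] at h3
    refine isUnit_iff_ne_zero.mpr fun h0 => ?_
    rw [h0, mul_zero] at h3
    have : (0 : ℝ) < 2 ^ Fintype.card n := by positivity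
    linarith
  rw [hB, Matrix.mul_assoc, Matrix.mul_nonsing_inv _ hD, Matrix.mul_one]

/-- the basic constant -/
def J0 (n : Type*) [Fintype n] [DecidableEq n] (k : ℕ) : ENNReal :=
  ∫⁻ z : SkE n, ENNReal.ofReal ((|(1 + sk z).det| ^ k)⁻¹)

lemma posdef_S (W : Matrix m n ℝ) : (1 + Wᵀ * W).PosDef := by
  have h : (Wᵀ * W).PosSemidef := by
    have := Matrix.posSemidef_conjTranspose_mul_self W
    rwa [Matrix.conjTranspose_eq_transpose_of_trivial] at this
  exact Matrix.PosDef.one.add_posSemidef h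

lemma J_scale [Nonempty m] [Nonempty n] (W : Matrix m n ℝ) :
    ∫⁻ z : SkE n, ENNReal.ofReal
      ((|((1 + Wᵀ * W) + sk z).det| ^ (Fintype.card m + Fintype.card n - 1))⁻¹)
      = ENNReal.ofReal ((1 + Wᵀ * W).det ^
          ((1 : ℝ) / 2 - (Fintype.card m : ℝ) - (Fintype.card n : ℝ) / 2)) *
        J0 n (Fintype.card m + Fintype.card n - 1) := by
  set S := 1 + Wᵀ * W with hS
  have hpd : S.PosDef := posdef_S W
  set k := Fintype.card m + Fintype.card n - 1 with hk
  obtain ⟨R, hR⟩ : ∃ R : Matrix n n ℝ, S = Rᵀ * R := by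
    open scoped MatrixOrder in
    obtain ⟨R, hR⟩ := CStarAlgebra.nonneg_iff_eq_star_mul_self.mp hpd.posSemidef.nonneg
    exact ⟨R, by rw [hR, Matrix.star_eq_conjTranspose, Matrix.conjTranspose_eq_transpose_of_trivial]⟩
  have hdet : S.det = |R.det| ^ 2 := by
    rw [hR, Matrix.det_mul, Matrix.det_transpose, sq_abs, sq]
  have hR0 : R.det ≠ 0 := by
    intro h
    have := hpd.det_pos
    rw [hdet, h] at this
    simp at this
  have hRp : 0 < |R.det| := abs_pos.mpr hR0
  have hL : LinearMap.det (Lq R) ≠ 0 := by rw [det_Lq R hR0]; exact pow_ne_zero _ hR0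
  rw [lintegral_linear_sub volume (Lq R) hL, det_Lq R hR0]
  have e : ∀ z : SkE n, ENNReal.ofReal ((|(S + sk (Lq R z)).det| ^ k)⁻¹)
      = ENNReal.ofReal ((|R.det| ^ (2 * k))⁻¹) * ENNReal.ofReal ((|(1 + sk z).det| ^ k)⁻¹) := by
    intro z
    rw [← ENNReal.ofReal_mul (by positivity)]
    congr 1
    have : S + sk (Lq R z) = Rᵀ * (1 + sk z) * R := by
      rw [sk_Lq, hR, mul_add, add_mul, mul_one]
    rw [this, Matrix.det_mul, Matrix.det_mul, Matrix.det_transpose, abs_mul, abs_mul]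
    rw [← mul_inv]
    congr 1
    ring
  simp_rw [e]
  rw [lintegral_const_mul' _ _ ENNReal.ofReal_ne_top, ← mul_assoc, ← ENNReal.ofReal_mul (abs_nonneg _)]
  rw [J0]
  congr 2
  rw [hdet, ← Real.rpow_natCast |R.det| 2, ← Real.rpow_mul hRp.le, abs_pow,
    ← Real.rpow_natCast |R.det| (2 * k), ← Real.rpow_neg hRp.le, ← Real.rpow_natCast,
    ← Real.rpow_add hRp]
  congr 1
  have hm : 1 ≤ Fintype.card m := Fintype.card_pos
  have hn : 1 ≤ Fintype.card n := Fintype.card_pos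
  rw [hk, Nat.cast_sub hn, Nat.cast_mul, Nat.cast_sub (by omega)]
  push_cast
  ring

lemma measurable_psi : Measurable fun O : Matrix (m ⊕ n) (m ⊕ n) ℝ =>
    (O.toBlocks₁₂ * (1 + O.toBlocks₂₂)⁻¹ : Matrix m n ℝ) := by
  have h12 : Measurable fun O : Matrix (m ⊕ n) (m ⊕ n) ℝ => O.toBlocks₁₂ :=
    measurable_matrix_iff.mpr fun i j => measurable_matrix_iff.mp measurable_id (Sum.inl i) (Sum.inr j)
  have h22 : Measurable fun O : Matrix (m ⊕ n) (m ⊕ n) ℝ => O.toBlocks₂₂ :=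
    measurable_matrix_iff.mpr fun i j => measurable_matrix_iff.mp measurable_id (Sum.inr i) (Sum.inr j)
  exact measurable_matmul h12 (measurable_matinv.comp (measurable_one_add.comp h22))

lemma measurable_dens (e : ℝ) : Measurable fun W : m → n → ℝ =>
    ENNReal.ofReal ((1 + (Matrix.of W)ᵀ * (Matrix.of W)).det ^ e) := by
  have h1 : Measurable fun W : m → n → ℝ => (Matrix.of W : Matrix m n ℝ) := measurable_id
  have h2 : Measurable fun W : m → n → ℝ => (Matrix.of W : Matrix m n ℝ)ᵀ :=
    measurable_matrix_iff.mpr fun i j => measurable_matrix_iff.mp h1 j i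
  exact ((measurable_det.comp (measurable_one_add.comp (measurable_matmul h2 h1))).pow_const e).ennreal_ofReal

lemma inner_z [Nonempty m] [Nonempty n] (x : SkE m) (W : m → n → ℝ) (b : ENNReal) :
    ∫⁻ z : SkE n, rho (blk (x, (lmul (-(1 + sk x)) W, z))) * b =
      ENNReal.ofReal ((|(1 + sk x).det| ^ (Fintype.card m + Fintype.card n - 1))⁻¹) *
       (J0 n (Fintype.card m + Fintype.card n - 1) * (b *
       ENNReal.ofReal ((1 + (Matrix.of W)ᵀ * (Matrix.of W)).det ^
          ((1 : ℝ) / 2 - (Fintype.card m : ℝ) - (Fintype.card n : ℝ) / 2)))) := by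
  set k := Fintype.card m + Fintype.card n - 1 with hk
  let W' : Matrix m n ℝ := Matrix.of W
  let h : SkE n → ENNReal := fun z => ENNReal.ofReal ((|((1 + W'ᵀ * W') + sk z).det| ^ k)⁻¹)
  have hm : Measurable h := by
    have : Continuous fun z : SkE n => |((1 + W'ᵀ * W') + sk z).det| ^ k :=
      ((Continuous.matrix_det (continuous_const.add continuous_sk)).abs).pow k
    exact this.measurable.inv.ennreal_ofReal
  have e : ∀ z : SkE n, rho (blk (x, (lmul (-(1 + sk x)) W, z))) =
      ENNReal.ofReal ((|(1 + sk x).det| ^ k)⁻¹) * h (z - up (W'ᵀ * sk x * W')) := by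
    intro z
    have e1 : sk (blk (x, (lmul (-(1 + sk x)) W, z))) = bs (sk x) (-(1 + sk x) * W') (sk z) :=
      sk_blk _
    rw [rho, e1, bs_det, Fintype.card_sum, ← hk, ← ENNReal.ofReal_mul (by positivity), abs_mul,
      mul_pow, mul_inv]
  have hm' : Measurable fun z => h (z - up (W'ᵀ * sk x * W')) := hm.comp (measurable_id.sub_const _)
  simp_rw [e]
  rw [lintegral_mul_const _ (hm'.const_mul _),
    lintegral_const_mul' _ _ ENNReal.ofReal_ne_top,
    lintegral_sub_right_eq_self h (up (W'ᵀ * sk x * W'))]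
  have := J_scale W'
  rw [← hk] at this
  change _ * (∫⁻ z, ENNReal.ofReal ((|((1 + W'ᵀ * W') + sk z).det| ^ k)⁻¹)) * _ = _
  rw [this]
  simp only [W']
  ring

lemma main_integral [Nonempty m] [Nonempty n] : ∃ K : ENNReal,
    ∀ g : (m → n → ℝ) → ENNReal, Measurable g →
      ∫⁻ O, g (O.toBlocks₁₂ * (1 + O.toBlocks₂₂)⁻¹ : Matrix m n ℝ) ∂(muc (m ⊕ n)) =
        K * ∫⁻ W : m → n → ℝ, g W * ENNReal.ofReal ((1 + (Matrix.of W)ᵀ * (Matrix.of W)).det ^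
          ((1 : ℝ) / 2 - (Fintype.card m : ℝ) - (Fintype.card n : ℝ) / 2)) := by
  obtain ⟨c, hc⟩ := exists_blk_const (m := m) (n := n)
  set k := Fintype.card m + Fintype.card n - 1 with hk
  let q : SkE m → ENNReal := fun x => ENNReal.ofReal (|(1 + sk x).det| ^ Fintype.card n) *
    (ENNReal.ofReal ((|(1 + sk x).det| ^ k)⁻¹) * J0 n k)
  have hq : Measurable q := by
    have h0 : Continuous fun x : SkE m => |(1 + sk x).det| :=
      (Continuous.matrix_det (continuous_const.add continuous_sk)).abs
    exact (h0.pow _).measurable.ennreal_ofReal.mul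
      (((h0.pow _).measurable.inv.ennreal_ofReal).mul_const _)
  refine ⟨c * ∫⁻ x, q x, fun g hg => ?_⟩
  have hgΨ : Measurable fun O : Matrix (m ⊕ n) (m ⊕ n) ℝ =>
      g (O.toBlocks₁₂ * (1 + O.toBlocks₂₂)⁻¹ : Matrix m n ℝ) := hg.comp measurable_psi
  have hm : Measurable fun v : SkE (m ⊕ n) => rho v *
      g ((cy (sk v)).toBlocks₁₂ * (1 + (cy (sk v)).toBlocks₂₂)⁻¹ : Matrix m n ℝ) :=
    measurable_rho.mul (hgΨ.comp (measurable_cy.comp measurable_sk))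
  rw [lintegral_muc _ hgΨ]
  refine (hc _ hm).trans ?_
  rw [mul_assoc]
  congr 1
  rw [← lintegral_mul_const _ hq]
  refine lintegral_congr fun x => ?_
  haveI h1 := vol_haar m n
  have hx := det_one_add_skew (sk_transpose x)
  have hd : |LinearMap.det (lmul (n := n) (-(1 + sk x)))| = |(1 + sk x).det| ^ Fintype.card n := by
    rw [det_lmul, Matrix.det_neg, abs_pow, abs_mul, abs_pow, abs_neg, abs_one, one_pow, one_mul]
  have hL : LinearMap.det (lmul (n := n) (-(1 + sk x))) ≠ 0 := by
    rw [← abs_pos, hd]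
    exact pow_pos (abs_pos.mpr hx) _
  rw [lintegral_linear_sub volume (lmul (-(1 + sk x))) hL, hd]
  have e : ∀ (W : m → n → ℝ) (z : SkE n),
      g ((cy (sk (blk (x, (lmul (-(1 + sk x)) W, z))))).toBlocks₁₂ *
        (1 + (cy (sk (blk (x, (lmul (-(1 + sk x)) W, z))))).toBlocks₂₂)⁻¹ : Matrix m n ℝ) = g W := by
    intro W z
    have e1 : sk (blk (x, (lmul (-(1 + sk x)) W, z))) =
      bs (sk x) (-(1 + sk x) * Matrix.of W) (sk z) := sk_blk _
    rw [e1, bs_psi]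
    rfl
  have hgd : Measurable fun W : m → n → ℝ => g W *
      ENNReal.ofReal ((1 + (Matrix.of W)ᵀ * (Matrix.of W)).det ^
          ((1 : ℝ) / 2 - (Fintype.card m : ℝ) - (Fintype.card n : ℝ) / 2)) :=
    hg.mul (measurable_dens _)
  simp_rw [e, inner_z]
  rw [lintegral_const_mul' _ _ ENNReal.ofReal_ne_top, 
    lintegral_const_mul _ hgd]
  simp only [q]
  ring

end

lemma lintegral_ind_mul {α : Type*} [MeasureSpace α] (s : Set α) (hs : MeasurableSet s)
    (d : α → ENNReal) :
    ∫⁻ W : α, (s.indicator 1 : α → ENNReal) W * d W = ∫⁻ W in s, d W := by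
  rw [← lintegral_indicator hs]
  refine lintegral_congr fun W => ?_
  by_cases h : W ∈ s <;> simp [h]

/-- Let `T̄ = M + N` and let `O = [[A, B], [C, D]]` be a uniformly random (Haar) `T̄×T̄`
orthogonal matrix of determinant `1`, with `A` of size `M×M` and `D` of size `N×N`. Then the
law of `Ŵ = B(1+D)⁻¹` is absolutely continuous with respect to Lebesgue measure on `M×N` real
matrices, with density proportional to `det(1 + Ŵ*Ŵ)^(1/2 − M − N/2)`. -/
theorem corner_block_density (M N : ℕ) (hM : 0 < M) (hN : 0 < N)
    (Ω : Type*) [MeasurableSpace Ω] (P : Measure Ω) [IsProbabilityMeasure P]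
    (O : Ω → Matrix (Fin M ⊕ Fin N) (Fin M ⊕ Fin N) ℝ) (hmeas : Measurable O)
    (hlaw : IsHaarSO (Fin M ⊕ Fin N) (P.map O)) :
    ∃ c : ℝ, 0 < c ∧
      P.map (fun ω => (O ω).toBlocks₁₂ * (1 + (O ω).toBlocks₂₂)⁻¹) =
        volume.withDensity (fun W : Matrix (Fin M) (Fin N) ℝ =>
          ENNReal.ofReal
            (c * (1 + Wᵀ * W).det ^ ((1 : ℝ) / 2 - (M : ℝ) - (N : ℝ) / 2))) := by
  have iM : Nonempty (Fin M) := Fin.pos_iff_nonempty.mp hM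
  have iN : Nonempty (Fin N) := Fin.pos_iff_nonempty.mp hN
  obtain ⟨K, hK⟩ := main_integral (m := Fin M) (n := Fin N)
  simp only [Fintype.card_fin] at hK
  set e : ℝ := (1 : ℝ) / 2 - (M : ℝ) - (N : ℝ) / 2 with he
  set u := muc (Fin M ⊕ Fin N) Set.univ with hu
  have hu0 : u ≠ 0 := muc_univ_ne_zero
  have hut : u ≠ ⊤ := muc_univ_ne_top _ hlaw
  have hmu : muc (Fin M ⊕ Fin N) = u • P.map O := muc_eq _ hlaw
  let d : (Fin M → Fin N → ℝ) → ENNReal := fun W =>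
    ENNReal.ofReal ((1 + (Matrix.of W)ᵀ * (Matrix.of W)).det ^ e)
  have hd : Measurable d := measurable_dens e
  have hdpos : ∀ W : Fin M → Fin N → ℝ, 0 < (1 + (Matrix.of W)ᵀ * (Matrix.of W)).det ^ e :=
    fun W => Real.rpow_pos_of_pos (posdef_S _).det_pos _
  have hK1 : u = K * ∫⁻ W, d W := by
    have := hK (fun _ => 1) measurable_const
    simpa [hu] using this
  have hI : ∫⁻ W, d W ≠ 0 := by
    intro h
    rw [lintegral_eq_zero_iff hd] at h
    have hall : ∀ᵐ W : Fin M → Fin N → ℝ, False := by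
      filter_upwards [h] with W hW
      exact (ENNReal.ofReal_pos.mpr (hdpos W)).ne' hW
    have hv := vol_haar (Fin M) (Fin N)
    rw [ae_iff] at hall
    simp at hall
  have hK0 : K ≠ 0 := by
    intro h
    rw [h, zero_mul] at hK1
    exact hu0 hK1
  have hKt : K ≠ ⊤ := by
    intro h
    rw [h, ENNReal.top_mul hI] at hK1
    exact hut hK1
  have hc0 : K / u ≠ 0 := ENNReal.div_ne_zero.mpr ⟨hK0, hut⟩
  have hct : K / u ≠ ⊤ := ENNReal.div_ne_top hKt hu0
  refine ⟨(K / u).toReal, ENNReal.toReal_pos hc0 hct, ?_⟩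
  have hΨ := measurable_psi (m := Fin M) (n := Fin N)
  ext s hs
  have hcomp := hΨ.comp hmeas
  have h1 : P.map (fun ω => (O ω).toBlocks₁₂ * (1 + (O ω).toBlocks₂₂)⁻¹) s =
      ∫⁻ X, (s.indicator 1 : Matrix (Fin M) (Fin N) ℝ → ENNReal)
        (X.toBlocks₁₂ * (1 + X.toBlocks₂₂)⁻¹) ∂(P.map O) := by
    rw [lintegral_map (f := fun X : Matrix (Fin M ⊕ Fin N) (Fin M ⊕ Fin N) ℝ =>
      (s.indicator 1 : Matrix (Fin M) (Fin N) ℝ → ENNReal)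
        (X.toBlocks₁₂ * (1 + X.toBlocks₂₂)⁻¹)) ((measurable_one.indicator hs).comp hΨ) hmeas]
    rw [← lintegral_indicator_one hs]
    exact lintegral_map (measurable_one.indicator hs) hcomp
  have h2 := hK (s.indicator 1) (measurable_one.indicator hs)
  rw [hmu, lintegral_smul_measure, smul_eq_mul] at h2
  have h3 : ∀ W : Matrix (Fin M) (Fin N) ℝ,
      ENNReal.ofReal ((K / u).toReal * (1 + Wᵀ * W).det ^ e) = K / u * d W := by
    intro W
    rw [ENNReal.ofReal_mul ENNReal.toReal_nonneg, ENNReal.ofReal_toReal hct]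
    rfl
  rw [h1, withDensity_apply _ hs]
  simp_rw [h3]
  rw [lintegral_const_mul' _ _ hct]
  have h4 : ∫⁻ W : Fin M → Fin N → ℝ, (s.indicator 1 : (Fin M → Fin N → ℝ) → ENNReal) W * d W
      = ∫⁻ W in s, d W :=
    lintegral_ind_mul (α := Fin M → Fin N → ℝ) s hs d
  have h5 := h2.trans (congrArg (fun t => K * t) h4)
  change u * _ = _ at h5
  rw [ENNReal.div_eq_inv_mul, mul_assoc]
  refine (ENNReal.inv_mul_cancel_left hu0 hut).symm.trans ?_
  exact congrArg (fun t => u⁻¹ * t) h5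

end
end

section
/- Let O be a T̄×T̄ real orthogonal matrix of determinant 1, written in block form O = [[A, B],[C, D]] according to the splitting T̄ = (T̄−N) + N. If no complex eigenvalue of O equals −1, then no complex eigenvalue of D equals −1 (in particular 1_N + D is invertible) and no complex eigenvalue of A − B(1_N + D)^{−1}C equals −1. -/
open Matrix

noncomputable section

theorem aux_spec {n : ℕ} (X : Matrix (Fin n) (Fin n) ℝ) (h : (1 + X).det ≠ 0) :
    (-1 : ℂ) ∉ spectrum ℂ (X.map (algebraMap ℝ ℂ)) := by
  rw [spectrum.notMem_iff]
  have e : algebraMap ℂ (Matrix (Fin n) (Fin n) ℂ) (-1) - X.map (algebraMap ℝ ℂ)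
      = -((algebraMap ℝ ℂ).mapMatrix (1 + X)) := by
    rw [map_add, map_one, map_neg, map_one, RingHom.mapMatrix_apply]
    abel
  rw [e]
  refine IsUnit.neg (IsUnit.map _ ?_)
  rw [Matrix.isUnit_iff_isUnit_det]
  exact isUnit_iff_ne_zero.mpr h

theorem aux_det {ι : Type*} [Fintype ι] [DecidableEq ι] (X : Matrix ι ι ℝ)
    (h : (-1 : ℂ) ∉ spectrum ℂ (X.map (algebraMap ℝ ℂ))) : (1 + X).det ≠ 0 := by
  rw [spectrum.notMem_iff] at h
  have e : algebraMap ℂ (Matrix ι ι ℂ) (-1) - X.map (algebraMap ℝ ℂ)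
      = -((algebraMap ℝ ℂ).mapMatrix (1 + X)) := by
    rw [map_add, map_one, map_neg, map_one, RingHom.mapMatrix_apply]
    abel
  rw [e, IsUnit.neg_iff, Matrix.isUnit_iff_isUnit_det, ← RingHom.map_det, isUnit_iff_ne_zero] at h
  intro h0
  apply h
  rw [h0, map_zero]

/-- Let `O` be a `T̄×T̄` real orthogonal matrix of determinant `1`, written in block form
`O = [[A, B], [C, D]]` according to the splitting `T̄ = (T̄−N) + N`. If no complex eigenvalue of
`O` equals `−1`, then no complex eigenvalue of `D` equals `−1` (in particular `1 + D` is
invertible), and no complex eigenvalue of `A − B(1+D)⁻¹C` equals `−1`. -/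
theorem no_eigenvalue_minus_one (M N : ℕ)
    (O : Matrix (Fin M ⊕ Fin N) (Fin M ⊕ Fin N) ℝ)
    (horth : Oᵀ * O = 1) (hdet : O.det = 1)
    (hO : (-1 : ℂ) ∉ spectrum ℂ (O.map (algebraMap ℝ ℂ))) :
    (-1 : ℂ) ∉ spectrum ℂ ((O.toBlocks₂₂).map (algebraMap ℝ ℂ)) ∧
    IsUnit (1 + O.toBlocks₂₂) ∧
    (-1 : ℂ) ∉ spectrum ℂ
      ((O.toBlocks₁₁ - O.toBlocks₁₂ * (1 + O.toBlocks₂₂)⁻¹ * O.toBlocks₂₁).map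
        (algebraMap ℝ ℂ)) := by
  have h1 := aux_det O hO
  have hD : (1 + O.toBlocks₂₂).det ≠ 0 := by
    intro h0
    obtain ⟨v, hv, hv0⟩ := Matrix.exists_mulVec_eq_zero_iff.mpr h0
    apply h1
    apply Matrix.exists_mulVec_eq_zero_iff.mp
    have hDv : O.toBlocks₂₂ *ᵥ v = -v := by
      rw [Matrix.add_mulVec, Matrix.one_mulVec] at hv0
      exact eq_neg_of_add_eq_zero_right hv0
    have hOw : O *ᵥ (Sum.elim 0 v) = Sum.elim (O.toBlocks₁₂ *ᵥ v) (-v) := by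
      conv_lhs => rw [← Matrix.fromBlocks_toBlocks O]
      rw [Matrix.fromBlocks_mulVec]
      simp [hDv]
    have hn : (O *ᵥ (Sum.elim 0 v)) ⬝ᵥ (O *ᵥ (Sum.elim 0 v))
        = (Sum.elim 0 v : Fin M ⊕ Fin N → ℝ) ⬝ᵥ (Sum.elim 0 v) := by
      rw [Matrix.dotProduct_mulVec, Matrix.vecMul_mulVec, horth, Matrix.vecMul_one]
    have hB : O.toBlocks₁₂ *ᵥ v = 0 := by
      rw [hOw] at hn
      simpa using hn
    refine ⟨Sum.elim 0 v, ?_, ?_⟩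
    · intro h
      apply hv
      funext i
      exact congrFun h (Sum.inr i)
    · rw [Matrix.add_mulVec, Matrix.one_mulVec, hOw, hB]
      funext i
      cases i <;> simp
  have hU : IsUnit (1 + O.toBlocks₂₂) := by
    rw [Matrix.isUnit_iff_isUnit_det]
    exact isUnit_iff_ne_zero.mpr hD
  refine ⟨aux_spec _ hD, hU, aux_spec _ ?_⟩
  intro h0
  apply h1
  haveI : Invertible (1 + O.toBlocks₂₂) := hU.invertible
  have e : 1 + O = Matrix.fromBlocks (1 + O.toBlocks₁₁) O.toBlocks₁₂ O.toBlocks₂₁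
      (1 + O.toBlocks₂₂) := by
    conv_lhs => rw [← Matrix.fromBlocks_toBlocks O, ← Matrix.fromBlocks_one,
      Matrix.fromBlocks_add]
    simp
  rw [e, Matrix.det_fromBlocks₂₂, Matrix.invOf_eq_nonsing_inv, add_sub_assoc, h0, mul_zero]

end
end

section
/- For each T, let a_T and b_T be random vectors in ℝ^T and let 𝒱_T be a random M(T)-dimensional linear subspace of ℝ^T which is uniformly distributed among all M(T)-dimensional subspaces (i.e. 𝒱_T = Q_T W_T for a fixed M(T)-dimensional subspace W_T and a Haar-uniform orthogonal matrix Q_T) and independent of (a_T, b_T). Assume M(T)/T → α with 0 < α < 1, and that the angle between a_T and b_T tends to π/2 (i.e. the sample correlation ⟨a_T,b_T⟩/(‖a_T‖‖b_T‖) tends to 0 in probability) as T → ∞. Then the angle between the orthogonal projections of a_T and b_T onto 𝒱_T also tends to π/2 (their correlation tends to 0 in probability) as T → ∞. -/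
open MeasureTheory ProbabilityTheory Filter Matrix

noncomputable section

/-- `ν` is the Haar (uniform) probability measure on the full orthogonal group. -/
def IsHaarOrth (n : Type*) [Fintype n] [DecidableEq n] (ν : Measure (Matrix n n ℝ)) : Prop :=
  IsProbabilityMeasure ν ∧ (∀ᵐ O ∂ν, Oᵀ * O = 1) ∧
    ∀ U : Matrix n n ℝ, Uᵀ * U = 1 → ν.map (fun O => U * O) = ν

/-- sample correlation (cosine of the angle) between two vectors of `ℝ^T`. -/
def corr {T : ℕ} (u v : Fin T → ℝ) : ℝ :=
  (u ⬝ᵥ v) / (Real.sqrt (u ⬝ᵥ u) * Real.sqrt (v ⬝ᵥ v))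

/-- orthogonal projection matrix onto the column span of a `T × M` matrix `X`. -/
def colSpanProj {T M : ℕ} (X : Matrix (Fin T) (Fin M) ℝ) : Matrix (Fin T) (Fin T) ℝ :=
  X * (Xᵀ * X)⁻¹ * Xᵀ

/-- quadratic form of the rotated projection -/
def qf {T : ℕ} (G O : Matrix (Fin T) (Fin T) ℝ) (x : Fin T → ℝ) : ℝ :=
  x ⬝ᵥ ((O * G * Oᵀ) *ᵥ x)

lemma measurable_entry {m n : Type*} (i : m) (j : n) :
    Measurable (fun O : Matrix m n ℝ => O i j) :=
  (measurable_pi_apply j).comp (measurable_pi_apply (X := fun _ : m => n → ℝ) i)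

lemma measurable_qf_joint {T : ℕ} (G : Matrix (Fin T) (Fin T) ℝ) :
    Measurable (fun p : Matrix (Fin T) (Fin T) ℝ × (Fin T → ℝ) => qf G p.1 p.2) := by
  unfold qf
  simp only [dotProduct, mulVec, mul_apply, transpose_apply]
  have h1 : ∀ i j, Measurable (fun p : Matrix (Fin T) (Fin T) ℝ × (Fin T → ℝ) => p.1 i j) :=
    fun i j => (measurable_entry i j).comp measurable_fst
  have h2 : ∀ i, Measurable (fun p : Matrix (Fin T) (Fin T) ℝ × (Fin T → ℝ) => p.2 i) :=
    fun i => (measurable_pi_apply i).comp measurable_snd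
  refine Finset.measurable_sum _ fun i _ => (h2 i).mul ?_
  refine Finset.measurable_sum _ fun j _ => Measurable.mul ?_ (h2 j)
  refine Finset.measurable_sum _ fun k _ => Measurable.mul ?_ (h1 _ _)
  exact Finset.measurable_sum _ fun l _ => (h1 _ _).mul_const _

lemma measurable_qf {T : ℕ} (G : Matrix (Fin T) (Fin T) ℝ) (x : Fin T → ℝ) :
    Measurable (fun O => qf G O x) :=
  (measurable_qf_joint G).comp (measurable_id.prodMk measurable_const)

lemma measurable_lmul {T : ℕ} (U : Matrix (Fin T) (Fin T) ℝ) :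
    Measurable (fun O : Matrix (Fin T) (Fin T) ℝ => U * O) := by
  refine measurable_pi_iff.2 fun i => measurable_pi_iff.2 fun j => ?_
  simp only [mul_apply]
  exact Finset.measurable_sum _ fun k _ => (measurable_entry _ _).const_mul _

lemma qf_smul {T : ℕ} (G O : Matrix (Fin T) (Fin T) ℝ) (s : ℝ) (x : Fin T → ℝ) :
    qf G O (s • x) = s ^ 2 * qf G O x := by
  simp only [qf, mulVec_smul, dotProduct_smul, smul_dotProduct, smul_eq_mul]; ring

lemma qf_lmul {T : ℕ} (G O U : Matrix (Fin T) (Fin T) ℝ) (x : Fin T → ℝ) :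
    qf G (U * O) x = qf G O (Uᵀ *ᵥ x) := by
  unfold qf
  rw [transpose_mul]
  have : U * O * G * (Oᵀ * Uᵀ) = U * (O * G * Oᵀ) * Uᵀ := by simp only [Matrix.mul_assoc]
  rw [this, ← mulVec_mulVec, ← mulVec_mulVec, dotProduct_mulVec, ← mulVec_transpose]

lemma dotProduct_self_nonneg' {T : ℕ} (x : Fin T → ℝ) : 0 ≤ x ⬝ᵥ x :=
  Finset.sum_nonneg fun i _ => mul_self_nonneg (x i)

lemma exists_orth {T : ℕ} (x y : Fin T → ℝ) (h : x ⬝ᵥ x = y ⬝ᵥ y) :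
    ∃ U : Matrix (Fin T) (Fin T) ℝ, Uᵀ * U = 1 ∧ Uᵀ *ᵥ x = y := by
  by_cases hxy : x = y
  · exact ⟨1, by simp, by simp [hxy]⟩
  set w := x - y with hw
  have hw0 : w ⬝ᵥ w ≠ 0 := by
    rw [Ne, dotProduct_self_eq_zero]; exact sub_ne_zero.2 hxy
  have hww : w ⬝ᵥ w = 2 * (w ⬝ᵥ x) := by
    simp only [hw, sub_dotProduct, dotProduct_sub, dotProduct_comm y x]; linarith
  have ht : (1 - (2 / (w ⬝ᵥ w)) • vecMulVec w w)ᵀ = 1 - (2 / (w ⬝ᵥ w)) • vecMulVec w w := by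
    ext i j; simp [vecMulVec_apply, one_apply, mul_comm, eq_comm]
  have hm : vecMulVec w w * vecMulVec w w = (w ⬝ᵥ w) • vecMulVec w w := by
    ext i j
    simp only [mul_apply, vecMulVec_apply, Matrix.smul_apply, smul_eq_mul, dotProduct, Finset.sum_mul]
    exact Finset.sum_congr rfl fun k _ => by ring
  refine ⟨1 - (2 / (w ⬝ᵥ w)) • vecMulVec w w, ?_, ?_⟩
  · rw [ht, sub_mul, mul_sub, mul_sub, smul_mul_smul_comm, hm, smul_smul]
    have : 2 / (w ⬝ᵥ w) * (2 / (w ⬝ᵥ w)) * (w ⬝ᵥ w) = 2 * (2 / (w ⬝ᵥ w)) := by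
      field_simp
    rw [this, mul_smul, two_smul]; simp
  · rw [ht, sub_mulVec, one_mulVec, smul_mulVec]
    have : vecMulVec w w *ᵥ x = (w ⬝ᵥ x) • w := by
      ext i
      simp only [mulVec, dotProduct, vecMulVec_apply, Pi.smul_apply, smul_eq_mul, Finset.sum_mul]
      exact Finset.sum_congr rfl fun k _ => by ring
    rw [this, smul_smul]
    have h1 : 2 / (w ⬝ᵥ w) * (w ⬝ᵥ x) = 1 := by
      rw [div_mul_eq_mul_div, ← hww, div_self hw0]
    rw [h1, one_smul, hw]; abel

lemma haar_const {T : ℕ} {ν : Measure (Matrix (Fin T) (Fin T) ℝ)} (hν : IsHaarOrth (Fin T) ν)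
    (G : Matrix (Fin T) (Fin T) ℝ) (k : ℕ) (x y : Fin T → ℝ) (h : x ⬝ᵥ x = y ⬝ᵥ y) :
    ∫ O, qf G O x ^ k ∂ν = ∫ O, qf G O y ^ k ∂ν := by
  obtain ⟨U, hU, hUx⟩ := exists_orth x y h
  have := hν.2.2 U hU
  conv_lhs => rw [← this]
  rw [integral_map (measurable_lmul U).aemeasurable
    ((measurable_qf G x).pow_const k).aestronglyMeasurable]
  simp only [qf_lmul, hUx]

lemma haar_scale {T : ℕ} {ν : Measure (Matrix (Fin T) (Fin T) ℝ)} (hν : IsHaarOrth (Fin T) ν)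
    (G : Matrix (Fin T) (Fin T) ℝ) (k : ℕ) (x y : Fin T → ℝ) (hy : y ⬝ᵥ y = 1) :
    ∫ O, qf G O x ^ k ∂ν = (x ⬝ᵥ x) ^ k * ∫ O, qf G O y ^ k ∂ν := by
  have hx : 0 ≤ x ⬝ᵥ x := dotProduct_self_nonneg' x
  rw [haar_const hν G k x (Real.sqrt (x ⬝ᵥ x) • y) (by
    simp only [dotProduct_smul, smul_dotProduct, smul_eq_mul, hy, mul_one]
    rw [Real.mul_self_sqrt hx])]
  simp only [qf_smul, Real.sq_sqrt hx, mul_pow]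
  rw [integral_const_mul]

/-- `N` symmetric idempotent -/
lemma proj_dot {T : ℕ} {N : Matrix (Fin T) (Fin T) ℝ} (hs : Nᵀ = N) (hi : N * N = N)
    (x y : Fin T → ℝ) : (N *ᵥ x) ⬝ᵥ (N *ᵥ y) = x ⬝ᵥ (N *ᵥ y) := by
  rw [dotProduct_mulVec, ← mulVec_transpose, hs, mulVec_mulVec, hi, dotProduct_mulVec x,
    ← mulVec_transpose, hs]

lemma proj_bd {T : ℕ} {N : Matrix (Fin T) (Fin T) ℝ} (hs : Nᵀ = N) (hi : N * N = N)
    (x : Fin T → ℝ) : 0 ≤ x ⬝ᵥ (N *ᵥ x) ∧ x ⬝ᵥ (N *ᵥ x) ≤ x ⬝ᵥ x := by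
  have h1 := proj_dot hs hi x x
  constructor
  · rw [← h1]; exact dotProduct_self_nonneg' _
  · have h2 := dotProduct_self_nonneg' (x - N *ᵥ x)
    simp only [sub_dotProduct, dotProduct_sub, dotProduct_comm (N *ᵥ x) x, h1] at h2
    linarith

lemma conj_symm {T : ℕ} {G : Matrix (Fin T) (Fin T) ℝ} (hs : Gᵀ = G) (O : Matrix (Fin T) (Fin T) ℝ) :
    (O * G * Oᵀ)ᵀ = O * G * Oᵀ := by
  simp only [transpose_mul, transpose_transpose, hs, Matrix.mul_assoc]

lemma conj_idem {T : ℕ} {G : Matrix (Fin T) (Fin T) ℝ} (hi : G * G = G)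
    {O : Matrix (Fin T) (Fin T) ℝ} (hO : Oᵀ * O = 1) :
    (O * G * Oᵀ) * (O * G * Oᵀ) = O * G * Oᵀ := by
  calc (O * G * Oᵀ) * (O * G * Oᵀ) = O * G * (Oᵀ * O) * G * Oᵀ := by simp only [Matrix.mul_assoc]
    _ = O * (G * G) * Oᵀ := by rw [hO, Matrix.mul_one, Matrix.mul_assoc O]
    _ = _ := by rw [hi]

lemma integrable_qf {T : ℕ} {ν : Measure (Matrix (Fin T) (Fin T) ℝ)} (hν : IsHaarOrth (Fin T) ν)
    {G : Matrix (Fin T) (Fin T) ℝ} (hs : Gᵀ = G) (hi : G * G = G) (k : ℕ) (x : Fin T → ℝ) :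
    Integrable (fun O => qf G O x ^ k) ν := by
  have := hν.1
  refine Integrable.of_bound ((measurable_qf G x).pow_const k).aestronglyMeasurable
    ((x ⬝ᵥ x) ^ k) ?_
  filter_upwards [hν.2.1] with O hO
  have h := proj_bd (conj_symm hs O) (conj_idem hi hO) x
  rw [Real.norm_eq_abs, abs_pow]
  refine pow_le_pow_left₀ (abs_nonneg _) ?_ k
  unfold qf
  rw [abs_of_nonneg h.1]; exact h.2

lemma qf_single {T : ℕ} (G O : Matrix (Fin T) (Fin T) ℝ) (i : Fin T) :
    qf G O (Pi.single i 1) = (O * G * Oᵀ) i i := by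
  simp [qf]

lemma sum_diag {T : ℕ} {G O : Matrix (Fin T) (Fin T) ℝ} (hO : Oᵀ * O = 1) :
    ∑ i, (O * G * Oᵀ) i i = G.trace := by
  change (O * G * Oᵀ).trace = _
  rw [Matrix.trace_mul_comm, ← Matrix.mul_assoc, hO, Matrix.one_mul]

lemma sum_Z {T : ℕ} {G O : Matrix (Fin T) (Fin T) ℝ} (hs : Gᵀ = G) (hi : G * G = G)
    (hO : Oᵀ * O = 1) :
    ∑ i, ∑ j, (qf G O (Pi.single i 1 + Pi.single j 1) ^ 2
      + qf G O (Pi.single i 1 - Pi.single j 1) ^ 2) =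
    4 * T * ∑ i, qf G O (Pi.single i 1) ^ 2 + 4 * G.trace ^ 2 + 8 * G.trace := by
  have hd := sum_diag (G := G) hO
  have hs' := conj_symm hs O
  have hi' := conj_idem hi hO
  simp only [qf_single]
  simp only [qf]
  generalize O * G * Oᵀ = N at *
  have hN : ∀ i j, N j i = N i j := fun i j => congrFun (congrFun hs' i) j
  have hZ : ∀ i j : Fin T, ((Pi.single i 1 + Pi.single j 1 : Fin T → ℝ) ⬝ᵥ
      (N *ᵥ (Pi.single i 1 + Pi.single j 1))) ^ 2 + ((Pi.single i 1 - Pi.single j 1 : Fin T → ℝ) ⬝ᵥ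
      (N *ᵥ (Pi.single i 1 - Pi.single j 1))) ^ 2 =
      2 * N i i ^ 2 + 2 * N j j ^ 2 + 4 * (N i i * N j j) + 8 * (N i j * N j i) := by
    intro i j
    simp only [mulVec_add, mulVec_sub, add_dotProduct, sub_dotProduct, dotProduct_add,
      dotProduct_sub, single_dotProduct, mulVec_single, one_mul, MulOpposite.op_one, one_smul,
      col_apply, hN i j]
    ring
  simp only [hZ, Finset.sum_add_distrib, ← Finset.mul_sum, ← Finset.sum_mul, hd]
  have h2 : ∑ i, ∑ j, N i j * N j i = G.trace := by
    rw [← hd]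
    exact Finset.sum_congr rfl fun i _ => by rw [← mul_apply, hi']
  rw [h2]
  simp only [Finset.sum_const, Finset.card_univ, Fintype.card_fin, nsmul_eq_mul,
    ← Finset.mul_sum]
  ring

lemma variance_bd {T : ℕ} (hT : 0 < T) {ν : Measure (Matrix (Fin T) (Fin T) ℝ)}
    (hν : IsHaarOrth (Fin T) ν) {G : Matrix (Fin T) (Fin T) ℝ} (hs : Gᵀ = G) (hi : G * G = G)
    {m : ℕ} (hm : G.trace = m) (hmT : m ≤ T) (x : Fin T → ℝ) :
    Integrable (fun O => (qf G O x - m / T * (x ⬝ᵥ x)) ^ 2) ν ∧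
    ∫ O, (qf G O x - m / T * (x ⬝ᵥ x)) ^ 2 ∂ν ≤ 2 * (x ⬝ᵥ x) ^ 2 / T := by
  have := hν.1
  have hTr : (0 : ℝ) < T := by exact_mod_cast hT
  have hmr : (m : ℝ) ≤ T := by exact_mod_cast hmT
  have hm0 : (0 : ℝ) ≤ m := by positivity
  let e : Fin T → Fin T → ℝ := fun i => Pi.single i 1
  have he : ∀ i, e i ⬝ᵥ e i = 1 := fun i => by simp [e]
  let i0 : Fin T := ⟨0, hT⟩
  set A := ∫ O, qf G O (e i0) ^ 2 ∂ν with hA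
  set B := ∫ O, qf G O (e i0) ^ 1 ∂ν with hB
  have hf : ∀ y, ∫ O, qf G O y ^ 2 ∂ν = (y ⬝ᵥ y) ^ 2 * A := fun y =>
    haar_scale hν G 2 y _ (he i0)
  have hg : ∀ y, ∫ O, qf G O y ^ 1 ∂ν = (y ⬝ᵥ y) ^ 1 * B := fun y =>
    haar_scale hν G 1 y _ (he i0)
  have I1 : ∀ y, Integrable (fun O => qf G O y ^ 1) ν := integrable_qf hν hs hi 1
  have I2 : ∀ y, Integrable (fun O => qf G O y ^ 2) ν := integrable_qf hν hs hi 2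
  have I3 : ∀ i j, Integrable (fun O => qf G O (e i + e j) ^ 2 + qf G O (e i - e j) ^ 2) ν :=
    fun i j => (I2 _).add (I2 _)
  have hBv : T * B = m := by
    have h1 : ∫ O, ∑ i, qf G O (e i) ^ 1 ∂ν = ∫ O, (m : ℝ) ∂ν := by
      refine integral_congr_ae ?_
      filter_upwards [hν.2.1] with O hO
      simp only [pow_one, e, qf_single]
      rw [sum_diag hO, hm]
    rw [integral_finsetSum _ (fun i _ => I1 _)] at h1
    simp only [hg, he] at h1
    simpa using h1
  have hAv : (4 * T ^ 2 + 8 * T) * A = 4 * (m : ℝ) ^ 2 + 8 * m := by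
    have h1 : ∫ O, ∑ i, ∑ j, (qf G O (e i + e j) ^ 2 + qf G O (e i - e j) ^ 2) ∂ν =
        ∫ O, (4 * T * ∑ i, qf G O (e i) ^ 2 + (4 * (m : ℝ) ^ 2 + 8 * m)) ∂ν := by
      refine integral_congr_ae ?_
      filter_upwards [hν.2.1] with O hO
      simp only [e]
      rw [sum_Z hs hi hO, hm]; ring
    rw [integral_finsetSum _ (fun i _ => integrable_finsetSum _ fun j _ => I3 i j),
      integral_add ((integrable_finsetSum _ fun i _ => I2 _).const_mul _) (integrable_const _),
      integral_const_mul, integral_finsetSum _ (fun i _ => I2 _)] at h1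
    have h2 : ∀ i, ∫ O, ∑ j, (qf G O (e i + e j) ^ 2 + qf G O (e i - e j) ^ 2) ∂ν
        = 8 * (T + 1) * A := by
      intro i
      rw [integral_finsetSum _ (fun j _ => I3 i j)]
      have h3 : ∀ j, ∫ O, (qf G O (e i + e j) ^ 2 + qf G O (e i - e j) ^ 2) ∂ν
          = 8 * A + if i = j then 8 * A else 0 := by
        intro j
        rw [integral_add (I2 _) (I2 _), hf, hf]
        simp only [add_dotProduct, sub_dotProduct, dotProduct_add, dotProduct_sub, he]
        split_ifs with hij
        · subst hij; simp only [he]; ring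
        · have h4 : e i ⬝ᵥ e j = 0 := by simp [e, hij]
          have h5 : e j ⬝ᵥ e i = 0 := by rw [dotProduct_comm, h4]
          rw [h4, h5]; ring
      simp only [h3, Finset.sum_add_distrib]
      simp
      ring
    simp only [h2, hf, he] at h1
    simp at h1
    linarith
  set s := x ⬝ᵥ x with hsx
  have hexp : (fun O => (qf G O x - m / T * s) ^ 2) =
      fun O => qf G O x ^ 2 - 2 * (m / T * s) * qf G O x ^ 1 + (m / T * s) ^ 2 := by
    funext O; ring
  have I4 : Integrable (fun O => qf G O x ^ 2 - 2 * (m / T * s) * qf G O x ^ 1) ν :=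
    (I2 x).sub ((I1 x).const_mul _)
  refine ⟨?_, ?_⟩
  · rw [hexp]
    exact ((I2 x).sub ((I1 x).const_mul _)).add (integrable_const _)
  rw [hexp, integral_add I4 (integrable_const _),
    integral_sub (I2 x) ((I1 x).const_mul _), integral_const_mul, hf, hg, ← hsx]
  have hB' : B = m / T := by field_simp; linarith
  have hA' : A = m * (m + 2) / (T * (T + 2)) := by field_simp; linarith
  have key : A - (m / T) ^ 2 ≤ 2 / T := by
    rw [hA']
    have : (m : ℝ) * (m + 2) / (T * (T + 2)) - (m / T) ^ 2
        = 2 / T * (m * (T - m) / (T * (T + 2))) := by field_simp; ring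
    rw [this]
    refine mul_le_of_le_one_right (by positivity) ?_
    rw [div_le_one (by positivity)]
    nlinarith
  simp only [integral_const, probReal_univ, smul_eq_mul, one_mul]
  calc s ^ 2 * A - 2 * (m / T * s) * (s ^ 1 * B) + (m / T * s) ^ 2
      = s ^ 2 * (A - (m / T) ^ 2) := by rw [hB']; ring
    _ ≤ s ^ 2 * (2 / T) := by gcongr
    _ = _ := by ring

lemma isUnit_gram {T m : ℕ} {W : Matrix (Fin T) (Fin m) ℝ} (h : W.rank = m) :
    IsUnit (Wᵀ * W) := by
  rw [← mulVec_surjective_iff_isUnit]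
  have h1 : (Wᵀ * W).rank = m := by rw [rank_transpose_mul_self, h]
  have h2 : LinearMap.range (Wᵀ * W).mulVecLin = ⊤ := by
    apply Submodule.eq_top_of_finrank_eq
    rw [← Matrix.rank, h1]; simp
  exact LinearMap.range_eq_top.1 h2

lemma csp_symm {T m : ℕ} (W : Matrix (Fin T) (Fin m) ℝ) : (colSpanProj W)ᵀ = colSpanProj W := by
  simp only [colSpanProj, transpose_mul, transpose_transpose, transpose_nonsing_inv,
    Matrix.mul_assoc]

lemma csp_idem {T m : ℕ} {W : Matrix (Fin T) (Fin m) ℝ} (h : W.rank = m) :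
    colSpanProj W * colSpanProj W = colSpanProj W := by
  have hu := (isUnit_iff_isUnit_det _).1 (isUnit_gram h)
  unfold colSpanProj
  calc W * (Wᵀ * W)⁻¹ * Wᵀ * (W * (Wᵀ * W)⁻¹ * Wᵀ)
      = W * (Wᵀ * W)⁻¹ * ((Wᵀ * W) * (Wᵀ * W)⁻¹) * Wᵀ := by simp only [Matrix.mul_assoc]
    _ = _ := by rw [mul_nonsing_inv _ hu, Matrix.mul_one]

lemma csp_trace {T m : ℕ} {W : Matrix (Fin T) (Fin m) ℝ} (h : W.rank = m) :
    (colSpanProj W).trace = m := by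
  have hu := (isUnit_iff_isUnit_det _).1 (isUnit_gram h)
  unfold colSpanProj
  rw [trace_mul_comm, ← Matrix.mul_assoc, mul_nonsing_inv _ hu]
  simp

lemma csp_conj {T m : ℕ} (W : Matrix (Fin T) (Fin m) ℝ) {O : Matrix (Fin T) (Fin T) ℝ}
    (hO : Oᵀ * O = 1) : colSpanProj (O * W) = O * colSpanProj W * Oᵀ := by
  unfold colSpanProj
  have : (O * W)ᵀ * (O * W) = Wᵀ * W := by
    rw [transpose_mul, Matrix.mul_assoc, ← Matrix.mul_assoc Oᵀ, hO, Matrix.one_mul]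
  rw [this, transpose_mul]
  simp only [Matrix.mul_assoc]

lemma prob_bd {T : ℕ} (hT : 0 < T) {Ω : Type*} [MeasurableSpace Ω] (P : Measure Ω)
    [IsProbabilityMeasure P] (Q : Ω → Matrix (Fin T) (Fin T) ℝ) (hQ : Measurable Q)
    (X : Ω → Fin T → ℝ) (hX : Measurable X) (hind : IndepFun Q X P)
    (hν : IsHaarOrth (Fin T) (P.map Q)) {G : Matrix (Fin T) (Fin T) ℝ}
    (hs : Gᵀ = G) (hi : G * G = G)
    {m : ℕ} (hm : G.trace = m) (hmT : m ≤ T) (hX4 : ∀ ω, X ω ⬝ᵥ X ω ≤ 4) {δ : ℝ} (hδ : 0 < δ) :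
    P {ω | δ ≤ |qf G (Q ω) (X ω) - m / T * (X ω ⬝ᵥ X ω)|} ≤ ENNReal.ofReal (32 / δ ^ 2 / T) := by
  have hTr : (0 : ℝ) < T := by exact_mod_cast hT
  have hdot : Measurable (fun x : Fin T → ℝ => x ⬝ᵥ x) :=
    Finset.measurable_sum _ fun i _ => (measurable_pi_apply i).mul (measurable_pi_apply i)
  have hD : Measurable (fun p : Matrix (Fin T) (Fin T) ℝ × (Fin T → ℝ) =>
      ENNReal.ofReal ((qf G p.1 p.2 - m / T * (p.2 ⬝ᵥ p.2)) ^ 2)) :=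
    (((measurable_qf_joint G).sub ((hdot.comp measurable_snd).const_mul _)).pow_const 2).ennreal_ofReal
  have hQX : Measurable (fun ω => (Q ω, X ω)) := hQ.prodMk hX
  have hL : ∫⁻ ω, ENNReal.ofReal ((qf G (Q ω) (X ω) - m / T * (X ω ⬝ᵥ X ω)) ^ 2) ∂P
      ≤ ENNReal.ofReal (32 / T) := by
    have e1 := lintegral_map (μ := P) hD hQX
    have hprod := (indepFun_iff_map_prod_eq_prod_map_map hQ.aemeasurable hX.aemeasurable).1 hind
    have := hν.1
    have : IsProbabilityMeasure (P.map X) := Measure.isProbabilityMeasure_map hX.aemeasurable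
    rw [← e1, hprod, lintegral_prod_symm' _ hD]
    have hin : ∀ x : Fin T → ℝ, ∫⁻ O, ENNReal.ofReal ((qf G O x - m / T * (x ⬝ᵥ x)) ^ 2) ∂(P.map Q)
        ≤ ENNReal.ofReal (2 * (x ⬝ᵥ x) ^ 2 / T) := by
      intro x
      obtain ⟨h1, h2⟩ := variance_bd hT hν hs hi hm hmT x
      rw [← ofReal_integral_eq_lintegral_ofReal h1 (ae_of_all _ fun O => sq_nonneg _)]
      exact ENNReal.ofReal_le_ofReal h2
    refine (lintegral_mono hin).trans ?_
    rw [lintegral_map (((hdot.pow_const 2).const_mul 2).div_const _).ennreal_ofReal hX]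
    calc _ ≤ ∫⁻ ω, ENNReal.ofReal (32 / T) ∂P := by
          refine lintegral_mono fun ω => ENNReal.ofReal_le_ofReal ?_
          have h0 := dotProduct_self_nonneg' (X ω)
          have h4 := hX4 ω
          gcongr
          nlinarith
      _ = _ := by simp
  have hM := mul_meas_ge_le_lintegral (μ := P) (hD.comp hQX) (ENNReal.ofReal (δ ^ 2))
  have hsub : {ω | δ ≤ |qf G (Q ω) (X ω) - m / T * (X ω ⬝ᵥ X ω)|} ⊆
      {ω | ENNReal.ofReal (δ ^ 2) ≤ ENNReal.ofReal ((qf G (Q ω) (X ω) - m / T * (X ω ⬝ᵥ X ω)) ^ 2)} := by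
    intro ω hω
    refine ENNReal.ofReal_le_ofReal ?_
    rw [← sq_abs (qf G (Q ω) (X ω) - _)]
    exact pow_le_pow_left₀ hδ.le hω 2
  have hfin : ENNReal.ofReal (δ ^ 2) * P {ω | δ ≤ |qf G (Q ω) (X ω) - m / T * (X ω ⬝ᵥ X ω)|}
      ≤ ENNReal.ofReal (32 / T) :=
    (mul_le_mul_right (measure_mono hsub) _).trans (hM.trans hL)
  have hδ2 : 0 < δ ^ 2 := by positivity
  have : (32 / δ ^ 2 / T : ℝ) = 32 / T / δ ^ 2 := by field_simp
  rw [this, ENNReal.ofReal_div_of_pos hδ2, ENNReal.le_div_iff_mul_le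
    (Or.inl (ENNReal.ofReal_pos.2 hδ2).ne') (Or.inl ENNReal.ofReal_ne_top), mul_comm]
  exact hfin

/-- normalization -/
def nz {T : ℕ} (x : Fin T → ℝ) : Fin T → ℝ := (Real.sqrt (x ⬝ᵥ x))⁻¹ • x

lemma measurable_nz {T : ℕ} : Measurable (nz : (Fin T → ℝ) → Fin T → ℝ) := by
  have hdot : Measurable (fun x : Fin T → ℝ => x ⬝ᵥ x) :=
    Finset.measurable_sum _ fun i _ => (measurable_pi_apply i).mul (measurable_pi_apply i)
  refine measurable_pi_iff.2 fun i => ?_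
  exact (hdot.sqrt.inv).mul (measurable_pi_apply i)

lemma sqrt_pos_of_ne {T : ℕ} {x : Fin T → ℝ} (hx : x ≠ 0) : 0 < Real.sqrt (x ⬝ᵥ x) := by
  refine Real.sqrt_pos.2 (lt_of_le_of_ne (dotProduct_self_nonneg' x) ?_)
  intro h; exact hx (dotProduct_self_eq_zero.1 h.symm)

lemma nz_dot {T : ℕ} {x : Fin T → ℝ} (hx : x ≠ 0) : nz x ⬝ᵥ nz x = 1 := by
  have h := sqrt_pos_of_ne hx
  have h2 := Real.mul_self_sqrt (dotProduct_self_nonneg' x)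
  simp only [nz, dotProduct_smul, smul_dotProduct, smul_eq_mul]
  rw [← h2, Real.sqrt_mul_self h.le]
  field_simp

lemma nz_dot_le {T : ℕ} (x : Fin T → ℝ) : nz x ⬝ᵥ nz x ≤ 1 := by
  by_cases hx : x = 0
  · simp [hx, nz]
  · exact (nz_dot hx).le

lemma smul_nz {T : ℕ} {x : Fin T → ℝ} (hx : x ≠ 0) : Real.sqrt (x ⬝ᵥ x) • nz x = x := by
  rw [nz, smul_smul, mul_inv_cancel₀ (sqrt_pos_of_ne hx).ne', one_smul]

lemma corr_smul {T : ℕ} {s t : ℝ} (hs : 0 < s) (ht : 0 < t) (u v : Fin T → ℝ) :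
    corr (s • u) (t • v) = corr u v := by
  unfold corr
  simp only [dotProduct_smul, smul_dotProduct, smul_eq_mul, ← mul_assoc]
  rw [Real.sqrt_mul (mul_self_nonneg s), Real.sqrt_mul (mul_self_nonneg t), Real.sqrt_mul_self hs.le,
    Real.sqrt_mul_self ht.le]
  have : s * √(u ⬝ᵥ u) * t * √(v ⬝ᵥ v) = (t * s) * (√(u ⬝ᵥ u) * √(v ⬝ᵥ v)) := by ring
  have h2 : s * √(u ⬝ᵥ u) * (t * √(v ⬝ᵥ v)) = (t * s) * (√(u ⬝ᵥ u) * √(v ⬝ᵥ v)) := by ring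
  first | rw [this] | rw [h2]
  rw [mul_div_mul_left _ _ (by positivity)]

lemma determ {T : ℕ} {N : Matrix (Fin T) (Fin T) ℝ} (hs : Nᵀ = N) (hi : N * N = N)
    {x y : Fin T → ℝ} (hx : x ⬝ᵥ x = 1) (hy : y ⬝ᵥ y = 1) {α ε δ c : ℝ} (hα : 0 < α) (hε : 0 < ε)
    (hδ4 : δ ≤ α / 4) (hδε : 6 * δ < ε * α) (hc : α / 2 ≤ c) (hc1 : c ≤ 1)
    (h1 : |x ⬝ᵥ (N *ᵥ x) - c * (x ⬝ᵥ x)| < δ) (h2 : |y ⬝ᵥ (N *ᵥ y) - c * (y ⬝ᵥ y)| < δ)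
    (h3 : |(x + y) ⬝ᵥ (N *ᵥ (x + y)) - c * ((x + y) ⬝ᵥ (x + y))| < δ)
    (h4 : |(x - y) ⬝ᵥ (N *ᵥ (x - y)) - c * ((x - y) ⬝ᵥ (x - y))| < δ)
    (h5 : |corr x y| < δ) : |corr (N *ᵥ x) (N *ᵥ y)| < ε := by
  have hsym : y ⬝ᵥ (N *ᵥ x) = x ⬝ᵥ (N *ᵥ y) := by
    rw [dotProduct_mulVec, ← mulVec_transpose, hs, dotProduct_comm]
  simp only [corr, hx, hy, Real.sqrt_one, mul_one, div_one] at h5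
  simp only [mulVec_add, mulVec_sub, add_dotProduct, sub_dotProduct, dotProduct_add,
    dotProduct_sub, hsym, hx, hy, dotProduct_comm y x] at h1 h2 h3 h4
  unfold corr
  rw [proj_dot hs hi, proj_dot hs hi, proj_dot hs hi]
  set p := x ⬝ᵥ (N *ᵥ x)
  set q := y ⬝ᵥ (N *ᵥ y)
  set r := x ⬝ᵥ (N *ᵥ y)
  set ρ := x ⬝ᵥ y
  rw [abs_lt] at h1 h2 h3 h4
  have hδ0 : 0 < δ := (abs_nonneg _).trans_lt h5
  have hcρ : |c * ρ| ≤ δ := by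
    rw [abs_mul, abs_of_nonneg (by linarith : 0 ≤ c)]
    nlinarith [abs_nonneg ρ]
  rw [abs_le] at hcρ
  have hr : |r| ≤ 3 / 2 * δ := by
    rw [abs_le]; constructor <;> linarith [h3.1, h3.2, h4.1, h4.2, hcρ.1, hcρ.2]
  have hp : α / 4 ≤ p := by linarith [h1.1]
  have hq : α / 4 ≤ q := by linarith [h2.1]
  have hpq : α / 4 ≤ √p * √q := by
    calc α / 4 = √(α / 4) * √(α / 4) := (Real.mul_self_sqrt (by positivity)).symm
      _ ≤ _ := by gcongr
  have hpos : 0 < √p * √q := by linarith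
  rw [abs_div, abs_of_pos hpos, div_lt_iff₀ hpos]
  nlinarith

lemma corr_zero_left {T : ℕ} (v : Fin T → ℝ) : corr 0 v = 0 := by simp [corr]
lemma corr_zero_right {T : ℕ} (v : Fin T → ℝ) : corr v 0 = 0 := by simp [corr]

/-- For each `T`, let `a_T, b_T` be random vectors in `ℝ^T` and let `𝒱_T = Q_T W_T` be a
uniformly random `M(T)`-dimensional subspace (the image of a fixed `M(T)`-dimensional subspace,
spanned by the columns of a full-column-rank matrix `W_T`, under a Haar orthogonal `Q_T`)
independent of `(a_T, b_T)`. If `M(T)/T → α ∈ (0,1)` and the correlation of `a_T` and `b_T`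
tends to `0` in probability (the angle tends to `π/2`), then the correlation of the orthogonal
projections of `a_T` and `b_T` onto `𝒱_T` also tends to `0` in probability. -/
theorem projection_preserves_orthogonality
    (α : ℝ) (hα0 : 0 < α) (hα1 : α < 1)
    (M : ℕ → ℕ) (hM : Tendsto (fun T : ℕ => (M T : ℝ) / T) atTop (nhds α))
    (Ω : ℕ → Type*) (mΩ : ∀ T, MeasurableSpace (Ω T))
    (P : ∀ T, Measure (Ω T)) (hP : ∀ T, IsProbabilityMeasure (P T))
    (a b : ∀ T, Ω T → Fin T → ℝ)
    (Q : ∀ T, Ω T → Matrix (Fin T) (Fin T) ℝ)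
    (hQmeas : ∀ T, Measurable (Q T))
    (habmeas : ∀ T, Measurable (fun ω => (a T ω, b T ω)))
    (hHaar : ∀ T, IsHaarOrth (Fin T) ((P T).map (Q T)))
    (hindep : ∀ T, IndepFun (Q T) (fun ω => (a T ω, b T ω)) (P T))
    (W : ∀ T, Matrix (Fin T) (Fin (M T)) ℝ)
    (hrank : ∀ T, (W T).rank = M T)
    (hangle : ∀ ε > (0 : ℝ),
      Tendsto (fun T : ℕ => P T {ω | ε ≤ |corr (a T ω) (b T ω)|}) atTop (nhds 0)) :
    ∀ ε > (0 : ℝ),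
      Tendsto (fun T : ℕ => P T {ω | ε ≤
          |corr ((colSpanProj (Q T ω * W T)).mulVec (a T ω))
                ((colSpanProj (Q T ω * W T)).mulVec (b T ω))|})
        atTop (nhds 0) := by
  intro ε hε
  obtain ⟨δ, hδ0, hδ4, hδε⟩ : ∃ δ : ℝ, 0 < δ ∧ δ ≤ α / 4 ∧ 6 * δ < ε * α := by
    refine ⟨min (α / 4) (ε * α / 12), by positivity, min_le_left _ _, ?_⟩
    have := min_le_right (α / 4) (ε * α / 12)
    have : 0 < ε * α := by positivity
    linarith
  set K : ℕ → ENNReal := fun T => ENNReal.ofReal (32 / δ ^ 2 / T) with hK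
  have hK0 : Tendsto K atTop (nhds 0) := by
    have := ENNReal.tendsto_ofReal (tendsto_const_div_atTop_nhds_zero_nat (32 / δ ^ 2))
    simpa using this
  have hlim : Tendsto (fun T => P T {ω | δ ≤ |corr (a T ω) (b T ω)|} + (K T + (K T + (K T + K T))))
      atTop (nhds 0) := by
    have := (hangle δ hδ0).add (hK0.add (hK0.add (hK0.add hK0)))
    simpa using this
  refine tendsto_of_tendsto_of_tendsto_of_le_of_le' tendsto_const_nhds hlim
    (Eventually.of_forall fun _ => zero_le) ?_
  have hc : ∀ᶠ T : ℕ in atTop, α / 2 < (M T : ℝ) / T :=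
    hM.eventually (lt_mem_nhds (by linarith))
  filter_upwards [hc, eventually_gt_atTop 0] with T hcT hT
  have := hP T
  have hTr : (0 : ℝ) < T := by exact_mod_cast hT
  have hmT : M T ≤ T := by rw [← hrank T]; exact rank_le_height _
  have hc1 : (M T : ℝ) / T ≤ 1 := by rw [div_le_one hTr]; exact_mod_cast hmT
  set G := colSpanProj (W T) with hG
  have hs : Gᵀ = G := csp_symm _
  have hi : G * G = G := csp_idem (hrank T)
  have htr : G.trace = M T := csp_trace (hrank T)
  have key : ∀ F : (Fin T → ℝ) × (Fin T → ℝ) → (Fin T → ℝ), Measurable F →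
      (∀ z, F z ⬝ᵥ F z ≤ 4) →
      P T {ω | δ ≤ |qf G (Q T ω) (F (a T ω, b T ω))
        - M T / T * (F (a T ω, b T ω) ⬝ᵥ F (a T ω, b T ω))|} ≤ K T := by
    intro F hF hF4
    exact prob_bd hT (P T) (Q T) (hQmeas T) (fun ω => F (a T ω, b T ω)) (hF.comp (habmeas T))
      ((hindep T).comp measurable_id hF) (hHaar T) hs hi htr hmT (fun ω => hF4 _) hδ0
  have mx : Measurable (fun z : (Fin T → ℝ) × (Fin T → ℝ) => nz z.1) :=
    measurable_nz.comp measurable_fst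
  have my : Measurable (fun z : (Fin T → ℝ) × (Fin T → ℝ) => nz z.2) :=
    measurable_nz.comp measurable_snd
  have k1 := key _ mx (fun z => by linarith [nz_dot_le z.1])
  have k2 := key _ my (fun z => by linarith [nz_dot_le z.2])
  have k3 := key (fun z => nz z.1 + nz z.2) (mx.add my) (fun z => by
    have := dotProduct_self_nonneg' (nz z.1 - nz z.2)
    simp only [add_dotProduct, sub_dotProduct, dotProduct_add, dotProduct_sub] at *
    linarith [nz_dot_le z.1, nz_dot_le z.2])
  have k4 := key (fun z => nz z.1 - nz z.2) (mx.sub my) (fun z => by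
    have := dotProduct_self_nonneg' (nz z.1 + nz z.2)
    simp only [add_dotProduct, sub_dotProduct, dotProduct_add, dotProduct_sub] at *
    linarith [nz_dot_le z.1, nz_dot_le z.2])
  refine le_trans ?_ (add_le_add le_rfl (add_le_add k1 (add_le_add k2 (add_le_add k3 k4))))
  refine le_trans ?_ (add_le_add le_rfl ((measure_union_le _ _).trans (add_le_add le_rfl
    ((measure_union_le _ _).trans (add_le_add le_rfl (measure_union_le _ _))))))
  refine le_trans ?_ (measure_union_le _ _)
  have hO : ∀ᵐ ω ∂(P T), (Q T ω)ᵀ * Q T ω = 1 :=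
    ae_of_ae_map (hQmeas T).aemeasurable (hHaar T).2.1
  refine measure_mono_ae ?_
  filter_upwards [hO] with ω hOω hω
  by_contra hcon
  refine absurd (show ε ≤ _ from hω) (not_le.2 ?_)
  replace hcon : ω ∉ ({ω | δ ≤ |corr (a T ω) (b T ω)|} ∪ _ : Set (Ω T)) := hcon
  simp only [Set.mem_union, Set.mem_setOf_eq, not_or, not_le] at hcon
  obtain ⟨c0, c1, c2, c3, c4⟩ := hcon
  rw [csp_conj _ hOω, ← hG]
  by_cases ha : a T ω = 0
  · rw [ha, mulVec_zero, corr_zero_left, abs_zero]; exact hε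
  by_cases hb : b T ω = 0
  · rw [hb, mulVec_zero, corr_zero_right, abs_zero]; exact hε
  have c0' : |corr (nz (a T ω)) (nz (b T ω))| < δ := by
    rwa [← corr_smul (sqrt_pos_of_ne ha) (sqrt_pos_of_ne hb), smul_nz ha, smul_nz hb]
  have := determ (conj_symm hs (Q T ω)) (conj_idem hi hOω) (nz_dot ha) (nz_dot hb) hα0 hε hδ4 hδε
    hcT.le hc1 c1 c2 c3 c4 c0'
  rwa [← corr_smul (sqrt_pos_of_ne ha) (sqrt_pos_of_ne hb), ← mulVec_smul, ← mulVec_smul,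
    smul_nz ha, smul_nz hb] at this


end
end
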